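/- For every real λ > 0 there exist a period p > 0 and a nonconstant C² curve γ = (x, y) : ℝ → ℝ² with γ(s + p) = γ(s) for all s, γ injective on [0, p), x(s) > 0 for all s, and (x'(s))² + (y'(s))² > 0 for all s, such that γ satisfies the geodesic equations of the conformal metric e^{2φ}(dx² + dy²) on the half-plane {x > 0} with φ(x,y) = λ·ln(x) − (x² + y²)/4; explicitly, writing φ_x = λ/x(s) − x(s)/2 and φ_y = −y(s)/2 along γ: x'' + φ_x·((x')² − (y')²) + 2φ_y·x'·y' = 0 and y'' + φ_y·((y')² − (x')²) + 2φ_x·x'·y' = 0 for all s. -/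

import Mathlib

open Real Set

/-!
Shoot a geodesic orthogonally from the point `(R, 0)` of the axis `y = 0` into the upper half-plane,
and call `θ` the direction of its velocity, so that `θ = π / 2` at the start. If it comes back to
the axis orthogonally, moving leftward (`π / 2 < θ < 3π / 2`) on the way, then reflecting it in the
axis gives a closed embedded geodesic. Such an `R` is found by connectedness: crossing the axis
while still moving leftward, and turning back to the right before having reached the axis, are
disjoint open conditions on `R`, and neither one holds for all `R`.

For `R² = 2 (λ + 1)` the geodesic is the circle of radius `R` about the origin, which does not cross
the axis moving leftward. For large `R` it does. Indeed `d(e^φ sin θ) = -(y / 2) e^φ ds` keeps the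
curve at `x ≥ R / 2` while it rises, so that the curvature there turns it to the horizontal within
height `O(1 / R)`. If it did not cross the axis on its way down, it would leave the leftward
directions at `θ = 3π / 2`, and it could do so only where the metric is as small as that height;
hence very close to the axis of rotation `x = 0`. But the momentum `e^φ (x sin θ - y cos θ)`, which
decreases along the curve, is then already so negative that the slope `y / x` forces `y` to vanish
earlier.
-/

open Filter Topology

open scoped NNReal

section Flow

variable {E : Type*} [NormedAddCommGroup E] [NormedSpace ℝ E] {f : E → E} {K L : ℝ≥0}

theorem exists_hasDerivAt_Ioo_of_lipschitzWith_of_norm_le [CompleteSpace E]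
    (hf : LipschitzWith K f) (hL : ∀ p, ‖f p‖ ≤ L) (p : E) (a : ℝ≥0) :
    ∃ γ : ℝ → E, γ 0 = p ∧ ∀ t ∈ Ioo (-a : ℝ) a, HasDerivAt γ (f (γ t)) t := by
  have hpl : IsPicardLindelof (fun _ : ℝ ↦ f) (⟨0, by simp⟩ : Icc (-a : ℝ) a) p (L * a) 0 L K :=
    ⟨fun _ _ ↦ hf.lipschitzOnWith, fun _ _ ↦ continuousOn_const, fun _ _ x _ ↦ hL x, by simp⟩
  obtain ⟨γ, hγ0, hγ⟩ := hpl.exists_eq_forall_mem_Icc_hasDerivWithinAt₀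
  exact ⟨γ, hγ0, fun t ht ↦
    (hγ t (Ioo_subset_Icc_self ht)).hasDerivAt (Icc_mem_nhds ht.1 ht.2)⟩

theorem exists_hasDerivAt_of_lipschitzWith_of_norm_le [CompleteSpace E] (hf : LipschitzWith K f)
    (hL : ∀ p, ‖f p‖ ≤ L) (p : E) :
    ∃ γ : ℝ → E, γ 0 = p ∧ ∀ t, HasDerivAt γ (f (γ t)) t := by
  choose γ hγ0 hγ using exists_hasDerivAt_Ioo_of_lipschitzWith_of_norm_le hf hL p
  have agree {a b : ℝ≥0} (ha : 0 < a) (hab : a ≤ b) : EqOn (γ a) (γ b) (Ioo (-a : ℝ) a) := by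
    have hab' : (a : ℝ) ≤ b := hab
    exact ODE_solution_unique_of_mem_Ioo (v := fun _ ↦ f) (s := fun _ ↦ univ) (t₀ := 0)
      (fun _ _ ↦ hf.lipschitzOnWith) (by simpa using ha) (fun t ht ↦ ⟨hγ a t ht, mem_univ _⟩)
      (fun t ht ↦ ⟨hγ b t (Ioo_subset_Ioo (neg_le_neg hab') hab' ht), mem_univ _⟩)
      (by rw [hγ0, hγ0])
  refine ⟨fun t ↦ γ (‖t‖₊ + 1) t, hγ0 _, fun t ↦ ?_⟩
  have mem_Ioo_nnnorm (s : ℝ) : s ∈ Ioo (-(‖s‖₊ + 1 : ℝ≥0) : ℝ) (‖s‖₊ + 1 : ℝ≥0) := by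
    rw [mem_Ioo, ← abs_lt]; simp
  refine (hγ _ t (mem_Ioo_nnnorm t)).congr_of_eventuallyEq ?_
  filter_upwards [Ioo_mem_nhds (mem_Ioo_nnnorm t).1 (mem_Ioo_nnnorm t).2] with s hs
  rcases le_total (‖s‖₊ + 1) (‖t‖₊ + 1) with h | h
  · exact agree (by positivity) h (mem_Ioo_nnnorm s)
  · exact (agree (by positivity) h hs).symm

theorem dist_le_dist_mul_exp_of_lipschitzWith (hf : LipschitzWith K f) {γ η : ℝ → E}
    (hγ : ∀ t, HasDerivAt γ (f (γ t)) t) (hη : ∀ t, HasDerivAt η (f (η t)) t) (t : ℝ) :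
    dist (γ t) (η t) ≤ dist (γ 0) (η 0) * exp (K * |t|) := by
  have forward {f : E → E} (hf : LipschitzWith K f) {γ η : ℝ → E}
      (hγ : ∀ t, HasDerivAt γ (f (γ t)) t) (hη : ∀ t, HasDerivAt η (f (η t)) t) {t : ℝ}
      (ht : 0 ≤ t) : dist (γ t) (η t) ≤ dist (γ 0) (η 0) * exp (K * t) := by
    simpa using dist_le_of_trajectories_ODE (v := fun _ ↦ f) (fun _ ↦ hf)
      (HasDerivAt.continuousOn fun s _ ↦ hγ s) (fun s _ ↦ (hγ s).hasDerivWithinAt)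
      (HasDerivAt.continuousOn fun s _ ↦ hη s) (fun s _ ↦ (hη s).hasDerivWithinAt) le_rfl t
      ⟨ht, le_rfl⟩
  have reverse {γ : ℝ → E} (hγ : ∀ t, HasDerivAt γ (f (γ t)) t) (t : ℝ) :
      HasDerivAt (fun s ↦ γ (-s)) ((-f) (γ (-t))) t := by
    simpa [Function.comp_def] using (hγ (-t)).scomp t (hasDerivAt_neg t)
  rcases le_total 0 t with ht | ht
  · rw [abs_of_nonneg ht]
    exact forward hf hγ hη ht
  · rw [abs_of_nonpos ht]
    simpa using forward hf.neg (reverse hγ) (reverse hη) (neg_nonneg.2 ht)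

theorem continuous_flow_of_lipschitzWith (hf : LipschitzWith K f) {Φ : E → ℝ → E}
    (hΦ0 : ∀ p, Φ p 0 = p) (hΦ : ∀ p t, HasDerivAt (Φ p) (f (Φ p t)) t) :
    Continuous fun q : E × ℝ ↦ Φ q.1 q.2 := by
  refine continuous_iff_continuousAt.2 fun ⟨p, t⟩ ↦ ?_
  have hlim : Tendsto (fun q : E × ℝ ↦
      dist q.1 p * exp (K * |q.2|) + dist (Φ p q.2) (Φ p t)) (𝓝 (p, t)) (𝓝 0) := by
    have hc : Continuous (Φ p) := continuous_iff_continuousAt.2 fun t ↦ (hΦ p t).continuousAt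
    have : Continuous fun q : E × ℝ ↦
        dist q.1 p * exp (K * |q.2|) + dist (Φ p q.2) (Φ p t) := by
      fun_prop
    simpa using this.tendsto (p, t)
  rw [ContinuousAt, tendsto_iff_dist_tendsto_zero]
  refine squeeze_zero (fun _ ↦ dist_nonneg) (fun q ↦ ?_) hlim
  refine (dist_triangle _ (Φ p q.2) _).trans (add_le_add_left ?_ _)
  simpa only [hΦ0] using dist_le_dist_mul_exp_of_lipschitzWith hf (hΦ q.1) (hΦ p) q.2

theorem eq_zero_of_norm_deriv_le_mul_norm {f f' : ℝ → E} {C : ℝ}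
    (hf : ∀ t, HasDerivAt f (f' t) t) (hle : ∀ t, ‖f' t‖ ≤ C * ‖f t‖) {t₀ : ℝ}
    (h₀ : f t₀ = 0) (t : ℝ) : f t = 0 := by
  have forward {g g' : ℝ → E} (hg : ∀ t, HasDerivAt g (g' t) t) (hle : ∀ t, ‖g' t‖ ≤ C * ‖g t‖)
      {a b : ℝ} (hab : a ≤ b) (ha : g a = 0) : g b = 0 :=
    eq_zero_of_abs_deriv_le_mul_abs_self_of_eq_zero_right
      (HasDerivAt.continuousOn fun t _ ↦ hg t) (fun t _ ↦ (hg t).hasDerivWithinAt) ha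
      (fun t _ ↦ hle t) b ⟨hab, le_rfl⟩
  rcases le_total t₀ t with h | h
  · exact forward hf hle h h₀
  · have := forward (g := fun s ↦ f (-s)) (g' := fun s ↦ -f' (-s))
      (fun s ↦ by simpa [Function.comp_def] using (hf (-s)).scomp s (hasDerivAt_neg s))
      (fun s ↦ by simpa using hle (-s)) (neg_le_neg h) (by simpa using h₀)
    simpa using this

end Flow

section BoundedLipschitz

variable {α β : Type*} [PseudoMetricSpace α] [PseudoMetricSpace β]

/-- Bounded Lipschitz functions with values in a normed group. They form an algebra, unlike the
merely Lipschitz functions, which is how the right-hand side of the flow is handled. -/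
def BoundedLipschitz {F : Type*} [SeminormedAddCommGroup F] (f : α → F) : Prop :=
  ∃ C : ℝ≥0, LipschitzWith C f ∧ ∀ p, ‖f p‖ ≤ C

namespace BoundedLipschitz

theorem exists_hasDerivAt {E : Type*} [NormedAddCommGroup E] [NormedSpace ℝ E] [CompleteSpace E]
    {f : E → E} (hf : BoundedLipschitz f) (t₀ : ℝ) (p : E) :
    ∃ γ : ℝ → E, γ t₀ = p ∧ ∀ t, HasDerivAt γ (f (γ t)) t := by
  obtain ⟨C, hC, hle⟩ := hf
  obtain ⟨γ, hγ0, hγ⟩ := exists_hasDerivAt_of_lipschitzWith_of_norm_le hC hle p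
  exact ⟨fun t ↦ γ (t - t₀), by simpa using hγ0, fun t ↦ (hγ (t - t₀)).comp_sub_const t t₀⟩

theorem const {F : Type*} [SeminormedAddCommGroup F] (c : F) :
    BoundedLipschitz fun _ : α ↦ c :=
  ⟨‖c‖₊, (LipschitzWith.const c).weaken bot_le, fun _ ↦ le_rfl⟩

theorem sub {F : Type*} [SeminormedAddCommGroup F] {f g : α → F} (hf : BoundedLipschitz f)
    (hg : BoundedLipschitz g) : BoundedLipschitz fun p ↦ f p - g p := by
  obtain ⟨C, hCf, hC⟩ := hf
  obtain ⟨D, hDg, hD⟩ := hg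
  exact ⟨C + D, hCf.sub hDg, fun p ↦ (norm_sub_le _ _).trans (add_le_add (hC p) (hD p))⟩

theorem mul {A : Type*} [SeminormedRing A] {f g : α → A} (hf : BoundedLipschitz f)
    (hg : BoundedLipschitz g) : BoundedLipschitz fun p ↦ f p * g p := by
  obtain ⟨C, hCf, hC⟩ := hf
  obtain ⟨D, hDg, hD⟩ := hg
  refine ⟨C * D + C * D, LipschitzWith.of_dist_le_mul fun p q ↦ ?_, fun p ↦ ?_⟩
  · calc dist (f p * g p) (f q * g q) = ‖f p * (g p - g q) + (f p - f q) * g q‖ := by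
          rw [dist_eq_norm]; congr 1; noncomm_ring
      _ ≤ ‖f p‖ * ‖g p - g q‖ + ‖f p - f q‖ * ‖g q‖ :=
          (norm_add_le _ _).trans (add_le_add (norm_mul_le _ _) (norm_mul_le _ _))
      _ ≤ C * (D * dist p q) + C * dist p q * D := by
          rw [← dist_eq_norm, ← dist_eq_norm]
          gcongr
          exacts [hC p, hDg.dist_le_mul p q, hCf.dist_le_mul p q, hD q]
      _ = (C * D + C * D : ℝ≥0) * dist p q := by push_cast; ring
  · calc ‖f p * g p‖ ≤ ‖f p‖ * ‖g p‖ := norm_mul_le _ _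
      _ ≤ C * D := mul_le_mul (hC p) (hD p) (norm_nonneg _) C.2
      _ ≤ (C * D + C * D : ℝ≥0) := by exact_mod_cast le_self_add

theorem comp {F : Type*} [SeminormedAddCommGroup F] {f : β → F} (hf : BoundedLipschitz f)
    {g : α → β} {K : ℝ≥0} (hg : LipschitzWith K g) : BoundedLipschitz fun p ↦ f (g p) := by
  obtain ⟨C, hCf, hC⟩ := hf
  refine ⟨max (C * K) C, (hCf.comp hg).weaken (le_max_left _ _), fun p ↦ (hC _).trans ?_⟩
  exact_mod_cast le_max_right _ _

theorem prodMk {F G : Type*} [SeminormedAddCommGroup F] [SeminormedAddCommGroup G] {f : α → F}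
    {g : α → G} (hf : BoundedLipschitz f) (hg : BoundedLipschitz g) :
    BoundedLipschitz fun p ↦ (f p, g p) := by
  obtain ⟨C, hCf, hC⟩ := hf
  obtain ⟨D, hDg, hD⟩ := hg
  refine ⟨max C D, hCf.prodMk hDg, fun p ↦ ?_⟩
  exact max_le_max (hC p) (hD p)

theorem sin : BoundedLipschitz Real.sin :=
  ⟨1, Real.lipschitzWith_sin, Real.abs_sin_le_one⟩

theorem cos : BoundedLipschitz Real.cos :=
  ⟨1, Real.lipschitzWith_cos, Real.abs_cos_le_one⟩

theorem one_div_one_add_sq : BoundedLipschitz fun x : ℝ ↦ 1 / (1 + x ^ 2) := by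
  refine ⟨1, LipschitzWith.of_dist_le_mul fun x z ↦ ?_, fun x ↦ ?_⟩
  · have hfactor : 1 / (1 + x ^ 2) - 1 / (1 + z ^ 2) =
        (x - z) * (-(x + z) / ((1 + x ^ 2) * (1 + z ^ 2))) := by
      field_simp; ring
    rw [Real.dist_eq, Real.dist_eq, hfactor, abs_mul, NNReal.coe_one, one_mul]
    refine mul_le_of_le_one_right (abs_nonneg _) ?_
    rw [abs_div, abs_of_pos (by positivity : (0:ℝ) < (1 + x ^ 2) * (1 + z ^ 2)),
      div_le_one (by positivity), abs_le]
    constructor <;> nlinarith [sq_nonneg (x - 1), sq_nonneg (x + 1), sq_nonneg (z - 1),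
      sq_nonneg (z + 1), sq_nonneg (x * z)]
  · rw [Real.norm_of_nonneg (by positivity), NNReal.coe_one, div_le_one (by positivity)]
    nlinarith

theorem div_one_add_sq : BoundedLipschitz fun x : ℝ ↦ x / (1 + x ^ 2) := by
  refine ⟨1, LipschitzWith.of_dist_le_mul fun x z ↦ ?_, fun x ↦ ?_⟩
  · have hfactor : x / (1 + x ^ 2) - z / (1 + z ^ 2) =
        (x - z) * ((1 - x * z) / ((1 + x ^ 2) * (1 + z ^ 2))) := by
      field_simp; ring
    rw [Real.dist_eq, Real.dist_eq, hfactor, abs_mul, NNReal.coe_one, one_mul]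
    refine mul_le_of_le_one_right (abs_nonneg _) ?_
    rw [abs_div, abs_of_pos (by positivity : (0:ℝ) < (1 + x ^ 2) * (1 + z ^ 2)),
      div_le_one (by positivity), abs_le]
    constructor <;> nlinarith [sq_nonneg (x - z), sq_nonneg (x + z), sq_nonneg (x * z)]
  · rw [Real.norm_eq_abs, abs_div, abs_of_pos (by positivity : (0:ℝ) < 1 + x ^ 2),
      NNReal.coe_one, div_le_one (by positivity), abs_le]
    constructor <;> nlinarith [sq_nonneg (x - 1), sq_nonneg (x + 1)]

end BoundedLipschitz

end BoundedLipschitz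

section Calculus

theorem eventually_nhdsGT_notMem_Icc {f : ℝ → ℝ} {f' c d t : ℝ} (hf : HasDerivAt f f' t)
    (hf' : f' ≠ 0) (hleft : ∀ᶠ s in 𝓝[<] t, f s ∈ Ioo c d) (ht : f t ∉ Ioo c d) :
    ∀ᶠ s in 𝓝[>] t, f s ∉ Icc c d := by
  have of_pos {f : ℝ → ℝ} {f' c d : ℝ} (hf : HasDerivAt f f' t) (hf' : 0 < f')
      (hleft : ∀ᶠ s in 𝓝[<] t, f s ∈ Ioo c d) (ht : f t ∉ Ioo c d) :
      ∀ᶠ s in 𝓝[>] t, f s ∉ Icc c d := by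
    have hslope : ∀ᶠ s in 𝓝[≠] t, 0 < slope f t s :=
      (hasDerivAt_iff_tendsto_slope.1 hf).eventually (lt_mem_nhds hf')
    obtain ⟨s, hs, hsl, hst⟩ := (hleft.and ((hslope.filter_mono (nhdsLT_le_nhdsNE t)).and
      self_mem_nhdsWithin)).exists
    have hfst : f s < f t := (slope_pos_iff_of_le (le_of_lt hst)).1 (slope_comm f t s ▸ hsl)
    filter_upwards [hslope.filter_mono (nhdsGT_le_nhdsNE t), self_mem_nhdsWithin] with u hu htu
    have hftu : f t < f u := (slope_pos_iff_of_le (le_of_lt htu)).1 hu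
    exact fun hmem ↦ ht ⟨hs.1.trans hfst, hftu.trans_le hmem.2⟩
  rcases hf'.lt_or_gt with hneg | hpos
  · simpa only [Pi.neg_apply, neg_mem_Icc_iff, neg_neg] using
      of_pos hf.neg (neg_pos.2 hneg) (c := -d) (d := -c)
        (by simpa only [Pi.neg_apply, neg_mem_Ioo_iff, neg_neg] using hleft)
        (by simpa only [Pi.neg_apply, neg_mem_Ioo_iff, neg_neg] using ht)
  · exact of_pos hf hpos hleft ht

theorem nonneg_of_hasDerivAt_of_eventually_le {f : ℝ → ℝ} {f' t : ℝ} (hf : HasDerivAt f f' t)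
    (h : ∀ᶠ s in 𝓝[<] t, f s ≤ f t) : 0 ≤ f' := by
  refine ge_of_tendsto (hasDerivAt_iff_tendsto_slope_left_right.1 hf).1 ?_
  filter_upwards [h, self_mem_nhdsWithin] with s hs hst
  rw [slope_def_field]
  exact div_nonneg_of_nonpos (sub_nonpos.2 hs) (sub_nonpos.2 (le_of_lt hst))

theorem contDiff_two_of_hasDerivAt {f f' f'' : ℝ → ℝ} (hf : ∀ t, HasDerivAt f (f' t) t)
    (hf' : ∀ t, HasDerivAt f' (f'' t) t) (hf'' : Continuous f'') : ContDiff ℝ 2 f := by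
  have hderiv : deriv f = f' := funext fun t ↦ (hf t).deriv
  have hderiv' : deriv f' = f'' := funext fun t ↦ (hf' t).deriv
  rw [← one_add_one_eq_two, contDiff_succ_iff_deriv, hderiv, contDiff_one_iff_deriv, hderiv']
  exact ⟨fun t ↦ (hf t).differentiableAt, by simp, fun t ↦ (hf' t).differentiableAt, hf''⟩

theorem exists_orderIso_hasDerivAt_of_periodic {f : ℝ → ℝ} {P : ℝ} (hf : Continuous f)
    (hpos : ∀ t, 0 < f t) (hP : 0 < P) (hper : Function.Periodic f P) :
    ∃ τ : ℝ ≃o ℝ, τ 0 = 0 ∧ (∀ t, HasDerivAt τ (f t) t) ∧ ∀ t, τ (t + P) = τ t + τ P := by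
  set F : ℝ → ℝ := fun t ↦ ∫ u in 0..t, f u
  have hF (t : ℝ) : HasDerivAt F (f t) t := (hf.integral_hasStrictDerivAt 0 t).hasDerivAt
  have hmono : StrictMono F := strictMono_of_hasDerivAt_pos hF hpos
  have hint := hf.intervalIntegrable (μ := MeasureTheory.volume)
  have hsurj : Function.Surjective F :=
    (continuous_iff_continuousAt.2 fun t ↦ (hF t).continuousAt).surjective
      (hper.tendsto_atTop_intervalIntegral_of_pos' (hint 0 P) hpos hP)
      (hper.tendsto_atBot_intervalIntegral_of_pos' (hint 0 P) hpos hP)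
  have hFP (t : ℝ) : F (t + P) = F t + F P := by
    simpa only [zero_add] using hper.intervalIntegral_add_eq_add 0 t hint
  exact ⟨hmono.orderIsoOfSurjective F hsurj, intervalIntegral.integral_same, hF, hFP⟩

theorem injOn_prodMk_of_reflection {x y : ℝ → ℝ} {l : ℝ} (hx : InjOn x (Icc 0 l))
    (hx_symm : ∀ t, x (2 * l - t) = x t) (hy_symm : ∀ t, y (2 * l - t) = -y t) (hy₀ : y 0 = 0)
    (hy : ∀ t ∈ Ioo 0 l, 0 < y t) : InjOn (fun t ↦ (x t, y t)) (Ico 0 (2 * l)) := by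
  have hyl : y l = 0 := by
    have := hy_symm l
    rw [two_mul, add_sub_cancel_right] at this
    linarith
  have hsign {t : ℝ} (ht : t ∈ Ico 0 (2 * l)) : 0 ≤ y t ↔ t ≤ l := by
    refine ⟨fun hyt ↦ ?_, fun htl ↦ ?_⟩
    · by_contra! hlt
      linarith [hy (2 * l - t) ⟨by linarith [ht.2], by linarith⟩, hy_symm t]
    · rcases ht.1.eq_or_lt with rfl | h₀
      · exact hy₀.ge
      · rcases htl.eq_or_lt with rfl | hlt
        · exact hyl.ge
        · exact (hy t ⟨h₀, hlt⟩).le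
  intro s hs t ht hst
  obtain ⟨hxst, hyst⟩ := Prod.mk.inj hst
  have hiff : s ≤ l ↔ t ≤ l := by rw [← hsign hs, ← hsign ht, hyst]
  rcases le_or_gt s l with hsl | hsl
  · exact hx ⟨hs.1, hsl⟩ ⟨ht.1, hiff.1 hsl⟩ hxst
  · have htl : l < t := by rwa [← not_le, ← hiff, not_le]
    have := hx ⟨by linarith [hs.2], by linarith⟩ ⟨by linarith [ht.2], by linarith⟩
      (by rwa [hx_symm, hx_symm] : x (2 * l - s) = x (2 * l - t))
    linarith

variable {f f' : ℝ → ℝ} {a b : ℝ}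

theorem le_of_hasDerivAt_nonneg_Ioo (hf : ∀ t, HasDerivAt f (f' t) t) (hab : a ≤ b)
    (h : ∀ t ∈ Ioo a b, 0 ≤ f' t) : f a ≤ f b := by
  refine monotoneOn_of_deriv_nonneg (convex_Icc a b) (HasDerivAt.continuousOn fun t _ ↦ hf t)
    (fun t _ ↦ (hf t).differentiableAt.differentiableWithinAt) (fun t ht ↦ ?_)
    (left_mem_Icc.2 hab) (right_mem_Icc.2 hab) hab
  rw [interior_Icc] at ht
  exact (hf t).deriv ▸ h t ht

theorem le_of_hasDerivAt_nonpos_Ioo (hf : ∀ t, HasDerivAt f (f' t) t) (hab : a ≤ b)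
    (h : ∀ t ∈ Ioo a b, f' t ≤ 0) : f b ≤ f a :=
  neg_le_neg_iff.1 <| le_of_hasDerivAt_nonneg_Ioo (f := -f) (fun t ↦ (hf t).neg) hab
    fun t ht ↦ neg_nonneg.2 (h t ht)

theorem lt_of_hasDerivAt_pos_Ioo (hf : ∀ t, HasDerivAt f (f' t) t) (hab : a < b)
    (h : ∀ t ∈ Ioo a b, 0 < f' t) : f a < f b := by
  refine strictMonoOn_of_deriv_pos (convex_Icc a b) (HasDerivAt.continuousOn fun t _ ↦ hf t)
    (fun t ht ↦ ?_) (left_mem_Icc.2 hab.le) (right_mem_Icc.2 hab.le) hab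
  rw [interior_Icc] at ht
  exact (hf t).deriv ▸ h t ht

theorem lt_of_hasDerivAt_neg_Ioo (hf : ∀ t, HasDerivAt f (f' t) t) (hab : a < b)
    (h : ∀ t ∈ Ioo a b, f' t < 0) : f b < f a :=
  neg_lt_neg_iff.1 <| lt_of_hasDerivAt_pos_Ioo (f := -f) (fun t ↦ (hf t).neg) hab
    fun t ht ↦ neg_pos.2 (h t ht)

theorem add_mul_sub_le_of_le_hasDerivAt {c : ℝ} (hf : ∀ t, HasDerivAt f (f' t) t) (hab : a ≤ b)
    (h : ∀ t ∈ Ioo a b, c ≤ f' t) : f a + c * (b - a) ≤ f b := by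
  have := le_of_hasDerivAt_nonneg_Ioo (fun t ↦ (hf t).sub ((hasDerivAt_id t).const_mul c)) hab
    fun t ht ↦ by simpa using h t ht
  simp only [Pi.sub_apply, id] at this
  linarith

theorem exists_lt_of_forall_le_hasDerivAt {c : ℝ} (hf : ∀ t, HasDerivAt f (f' t) t) (hc : 0 < c)
    (h : ∀ t, a < t → c ≤ f' t) (M : ℝ) : ∃ t ≥ a, M < f t := by
  refine ⟨a + (|M - f a| / c + 1), by linarith [div_nonneg (abs_nonneg (M - f a)) hc.le], ?_⟩
  have := add_mul_sub_le_of_le_hasDerivAt (b := a + (|M - f a| / c + 1)) hf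
    (by linarith [div_nonneg (abs_nonneg (M - f a)) hc.le]) fun t ht ↦ h t ht.1
  have hcalc : c * (a + (|M - f a| / c + 1) - a) = |M - f a| + c := by field_simp; ring
  linarith [le_abs_self (M - f a)]

theorem exists_first_mem_Icc {s : Set ℝ} (hs : IsClosed s) (hab : a ≤ b) (hb : b ∈ s) :
    ∃ t ∈ Icc a b, t ∈ s ∧ ∀ u ∈ Ico a t, u ∉ s := by
  have hbdd : BddBelow (s ∩ Icc a b) := ⟨a, fun t ht ↦ ht.2.1⟩
  have hmem := (hs.inter isClosed_Icc).csInf_mem ⟨b, hb, hab, le_rfl⟩ hbdd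
  exact ⟨_, hmem.2, hmem.1, fun u hu hus ↦
    not_lt.2 (csInf_le hbdd ⟨hus, hu.1, hu.2.le.trans hmem.2.2⟩) hu.2⟩

end Calculus

namespace Angenent

section Geodesics

/-- The rate at which a `DirectedGeodesic` is traversed in Euclidean arc length. It is chosen so
that the geodesic flow extends to a bounded Lipschitz vector field on all of `ℝ³`. -/
noncomputable def speed (x y : ℝ) : ℝ := x / (1 + x ^ 2) * (1 / (1 + y ^ 2))

/-- The conformal factor `e^φ` of the metric. -/
noncomputable def weight (lam x y : ℝ) : ℝ := exp (lam * log x - (x ^ 2 + y ^ 2) / 4)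

/-- The Euclidean signed curvature of the geodesic through `(x, y)` in the direction
`(cos θ, sin θ)`, that is, the derivative of `φ` along the normal `(-sin θ, cos θ)`. -/
noncomputable def curvature (lam x y θ : ℝ) : ℝ := (x / 2 - lam / x) * sin θ - y / 2 * cos θ

/-- The momentum of a geodesic through `(x, y)` in the direction `(cos θ, sin θ)` that is conjugate
to the rotations about the origin. -/
noncomputable def angularMomentum (lam x y θ : ℝ) : ℝ := weight lam x y * (x * sin θ - y * cos θ)

/-- The vector field `(speed · cos θ, speed · sin θ, speed · curvature)`, with the singularity of
`curvature` at `x = 0` cancelled against the factor `x` in `speed`. -/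
noncomputable def vectorField (lam : ℝ) (p : ℝ × ℝ × ℝ) : ℝ × ℝ × ℝ :=
  (speed p.1 p.2.1 * cos p.2.2, speed p.1 p.2.1 * sin p.2.2,
    (1 / 2 - (lam + 1 / 2) * (1 / (1 + p.1 ^ 2))) * (1 / (1 + p.2.1 ^ 2)) * sin p.2.2 -
      1 / 2 * (p.1 / (1 + p.1 ^ 2)) * (p.2.1 / (1 + p.2.1 ^ 2)) * cos p.2.2)

/-- An unparametrised geodesic of the metric, traversed at rate `speed` in the direction
`(cos θ, sin θ)`. -/
structure DirectedGeodesic (lam : ℝ) (x y θ : ℝ → ℝ) : Prop where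
  pos : ∀ t, 0 < x t
  hasDerivAt_x : ∀ t, HasDerivAt x (speed (x t) (y t) * cos (θ t)) t
  hasDerivAt_y : ∀ t, HasDerivAt y (speed (x t) (y t) * sin (θ t)) t
  hasDerivAt_θ : ∀ t, HasDerivAt θ (speed (x t) (y t) * curvature lam (x t) (y t) (θ t)) t

variable {lam : ℝ}

theorem speed_pos {x : ℝ} (hx : 0 < x) (y : ℝ) : 0 < speed x y := by
  unfold speed; positivity

theorem abs_speed_le (x y : ℝ) : |speed x y| ≤ |x| := by
  have hx : |x / (1 + x ^ 2)| ≤ |x| := by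
    rw [abs_div, abs_of_pos (by positivity : (0 : ℝ) < 1 + x ^ 2)]
    exact div_le_self (abs_nonneg _) (by nlinarith)
  have hy : |1 / (1 + y ^ 2)| ≤ 1 := by
    rw [abs_of_pos (by positivity), div_le_one (by positivity)]
    nlinarith
  rw [speed, abs_mul]
  exact (mul_le_of_le_one_right (abs_nonneg _) hy).trans hx

theorem le_speed {d x y X Y : ℝ} (hd : 0 < d) (hdx : d ≤ x) (hxX : x ≤ X) (hy : 0 ≤ y)
    (hyY : y ≤ Y) : d / ((1 + X ^ 2) * (1 + Y ^ 2)) ≤ speed x y := by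
  have hx : 0 ≤ x := hd.le.trans hdx
  rw [speed, div_mul_div_comm, mul_one]
  gcongr

theorem weight_pos (lam x y : ℝ) : 0 < weight lam x y := exp_pos _

theorem vectorField_thd {x : ℝ} (hx : 0 < x) (y θ : ℝ) :
    (vectorField lam (x, y, θ)).2.2 = speed x y * curvature lam x y θ := by
  simp only [vectorField, speed, curvature]
  field_simp
  ring

theorem boundedLipschitz_vectorField (lam : ℝ) : BoundedLipschitz (vectorField lam) := by
  have hx {f : ℝ → ℝ} (hf : BoundedLipschitz f) :
      BoundedLipschitz fun p : ℝ × ℝ × ℝ ↦ f p.1 := hf.comp LipschitzWith.prod_fst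
  have hy {f : ℝ → ℝ} (hf : BoundedLipschitz f) :
      BoundedLipschitz fun p : ℝ × ℝ × ℝ ↦ f p.2.1 :=
    hf.comp (LipschitzWith.prod_fst.comp LipschitzWith.prod_snd)
  have hθ {f : ℝ → ℝ} (hf : BoundedLipschitz f) :
      BoundedLipschitz fun p : ℝ × ℝ × ℝ ↦ f p.2.2 :=
    hf.comp (LipschitzWith.prod_snd.comp LipschitzWith.prod_snd)
  have hspeed : BoundedLipschitz fun p : ℝ × ℝ × ℝ ↦ speed p.1 p.2.1 :=
    (hx .div_one_add_sq).mul (hy .one_div_one_add_sq)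
  exact (hspeed.mul (hθ .cos)).prodMk <| (hspeed.mul (hθ .sin)).prodMk <|
    ((((BoundedLipschitz.const _).sub ((BoundedLipschitz.const _).mul
      (hx .one_div_one_add_sq))).mul (hy .one_div_one_add_sq)).mul (hθ .sin)).sub
    ((((BoundedLipschitz.const _).mul (hx .div_one_add_sq)).mul (hy .div_one_add_sq)).mul
      (hθ .cos))

theorem DirectedGeodesic.of_hasDerivAt_vectorField {γ : ℝ → ℝ × ℝ × ℝ}
    (hγ : ∀ t, HasDerivAt γ (vectorField lam (γ t)) t) (h0 : 0 < (γ 0).1) :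
    DirectedGeodesic lam (fun t ↦ (γ t).1) (fun t ↦ (γ t).2.1) (fun t ↦ (γ t).2.2) := by
  have hx (t : ℝ) : HasDerivAt (fun t ↦ (γ t).1) (vectorField lam (γ t)).1 t := (hγ t).fst
  have hne (t : ℝ) : (γ t).1 ≠ 0 := by
    intro ht
    have hle (s : ℝ) : ‖(vectorField lam (γ s)).1‖ ≤ 1 * ‖(γ s).1‖ := by
      rw [one_mul, vectorField, norm_mul]
      exact (mul_le_of_le_one_right (norm_nonneg _) (abs_cos_le_one _)).trans (abs_speed_le _ _)
    exact h0.ne' (eq_zero_of_norm_deriv_le_mul_norm hx hle ht 0)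
  have hpos (t : ℝ) : 0 < (γ t).1 := by
    by_contra! hneg
    obtain ⟨s, hs⟩ := mem_range_of_exists_le_of_exists_ge
      (continuous_iff_continuousAt.2 fun t ↦ (hx t).continuousAt) ⟨t, hneg⟩ ⟨0, h0.le⟩
    exact hne s hs
  exact ⟨hpos, hx, fun t ↦ (hγ t).snd.fst, fun t ↦ vectorField_thd (hpos t) _ _ ▸ (hγ t).snd.snd⟩

namespace DirectedGeodesic

variable {x y θ : ℝ → ℝ}

theorem hasDerivAt_vectorField (h : DirectedGeodesic lam x y θ) (t : ℝ) :
    HasDerivAt (fun t ↦ (x t, y t, θ t)) (vectorField lam (x t, y t, θ t)) t :=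
  (h.hasDerivAt_x t).prodMk ((h.hasDerivAt_y t).prodMk
    ((h.hasDerivAt_θ t).congr_deriv (vectorField_thd (h.pos t) _ _).symm))

theorem eq_of_eq_at (h : DirectedGeodesic lam x y θ) {x' y' θ' : ℝ → ℝ}
    (h' : DirectedGeodesic lam x' y' θ') {t₀ : ℝ} (hx : x t₀ = x' t₀) (hy : y t₀ = y' t₀)
    (hθ : θ t₀ = θ' t₀) (t : ℝ) : x t = x' t ∧ y t = y' t ∧ θ t = θ' t := by
  obtain ⟨K, hK, -⟩ := boundedLipschitz_vectorField lam
  have := ODE_solution_unique_univ (v := fun _ ↦ vectorField lam) (s := fun _ ↦ univ) (t₀ := t₀)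
    (fun _ ↦ hK.lipschitzOnWith) (fun t ↦ ⟨h.hasDerivAt_vectorField t, mem_univ _⟩)
    (fun t ↦ ⟨h'.hasDerivAt_vectorField t, mem_univ _⟩) (by simp only [hx, hy, hθ])
  simpa only [Prod.mk.injEq] using congrFun this t

theorem continuous_x (h : DirectedGeodesic lam x y θ) : Continuous x :=
  continuous_iff_continuousAt.2 fun t ↦ (h.hasDerivAt_x t).continuousAt

theorem continuous_y (h : DirectedGeodesic lam x y θ) : Continuous y :=
  continuous_iff_continuousAt.2 fun t ↦ (h.hasDerivAt_y t).continuousAt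

theorem continuous_θ (h : DirectedGeodesic lam x y θ) : Continuous θ :=
  continuous_iff_continuousAt.2 fun t ↦ (h.hasDerivAt_θ t).continuousAt

theorem speed_pos (h : DirectedGeodesic lam x y θ) (t : ℝ) : 0 < speed (x t) (y t) :=
  Angenent.speed_pos (h.pos t) _

theorem hasDerivAt_sin (h : DirectedGeodesic lam x y θ) (t : ℝ) :
    HasDerivAt (fun s ↦ sin (θ s))
      (cos (θ t) * (speed (x t) (y t) * curvature lam (x t) (y t) (θ t))) t :=
  (h.hasDerivAt_θ t).sin

theorem hasDerivAt_cos (h : DirectedGeodesic lam x y θ) (t : ℝ) :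
    HasDerivAt (fun s ↦ cos (θ s))
      (-sin (θ t) * (speed (x t) (y t) * curvature lam (x t) (y t) (θ t))) t :=
  (h.hasDerivAt_θ t).cos

theorem hasDerivAt_weight (h : DirectedGeodesic lam x y θ) (t : ℝ) :
    HasDerivAt (fun s ↦ weight lam (x s) (y s))
      (weight lam (x t) (y t) * (speed (x t) (y t) *
        ((lam / x t - x t / 2) * cos (θ t) - y t / 2 * sin (θ t)))) t := by
  have hx := (h.pos t).ne'
  refine ((((h.hasDerivAt_x t).log hx).const_mul lam).sub ((((h.hasDerivAt_x t).pow 2).add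
    ((h.hasDerivAt_y t).pow 2)).div_const 4)).exp.congr_deriv ?_
  change weight lam (x t) (y t) * _ = _
  congr 1
  push_cast
  field_simp
  ring

theorem hasDerivAt_weight_mul_sin (h : DirectedGeodesic lam x y θ) (t : ℝ) :
    HasDerivAt (fun s ↦ weight lam (x s) (y s) * sin (θ s))
      (-(speed (x t) (y t) * (y t / 2) * weight lam (x t) (y t))) t := by
  refine ((h.hasDerivAt_weight t).mul (h.hasDerivAt_sin t)).congr_deriv ?_
  simp only [curvature]
  linear_combination (-(weight lam (x t) (y t) * speed (x t) (y t) * (y t / 2))) *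
    sin_sq_add_cos_sq (θ t)

theorem hasDerivAt_angularMomentum (h : DirectedGeodesic lam x y θ) (t : ℝ) :
    HasDerivAt (fun s ↦ angularMomentum lam (x s) (y s) (θ s))
      (-(lam * speed (x t) (y t) * (y t / x t) * weight lam (x t) (y t))) t := by
  refine ((h.hasDerivAt_weight t).mul (((h.hasDerivAt_x t).mul (h.hasDerivAt_sin t)).sub
    ((h.hasDerivAt_y t).mul (h.hasDerivAt_cos t)))).congr_deriv ?_
  simp only [curvature, Pi.sub_apply, Pi.mul_apply]
  linear_combination (-(weight lam (x t) (y t) * speed (x t) (y t) * lam * (y t / x t))) *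
    sin_sq_add_cos_sq (θ t)

theorem hasDerivAt_slope (h : DirectedGeodesic lam x y θ) (t : ℝ) :
    HasDerivAt (fun s ↦ y s / x s)
      (speed (x t) (y t) * (x t * sin (θ t) - y t * cos (θ t)) / x t ^ 2) t := by
  refine ((h.hasDerivAt_y t).div (h.hasDerivAt_x t) (h.pos t).ne').congr_deriv ?_
  ring

theorem hasDerivAt_curvature (h : DirectedGeodesic lam x y θ) (t : ℝ) :
    HasDerivAt (fun s ↦ curvature lam (x s) (y s) (θ s))
      (speed (x t) (y t) * (curvature lam (x t) (y t) (θ t) *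
        ((x t * cos (θ t) + y t * sin (θ t)) / 2 - lam * cos (θ t) / x t)
        + lam * cos (θ t) * sin (θ t) / x t ^ 2)) t := by
  have hdiv : HasDerivAt (fun s ↦ lam / x s)
      (-(lam * (speed (x t) (y t) * cos (θ t)) / x t ^ 2)) t := by
    refine ((hasDerivAt_const t lam).div (h.hasDerivAt_x t) (h.pos t).ne').congr_deriv ?_
    ring
  refine (((((h.hasDerivAt_x t).div_const 2).sub hdiv).mul (h.hasDerivAt_sin t)).sub
    (((h.hasDerivAt_y t).div_const 2).mul (h.hasDerivAt_cos t))).congr_deriv ?_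
  simp only [curvature, Pi.sub_apply]
  ring

end DirectedGeodesic

end Geodesics

section LeftwardMotion

theorem cos_three_pi_div_two : cos (3 * π / 2) = 0 := by
  rw [show 3 * π / 2 = π / 2 + π by ring, cos_add_pi, cos_pi_div_two, neg_zero]

theorem sin_three_pi_div_two : sin (3 * π / 2) = -1 := by
  rw [show 3 * π / 2 = π / 2 + π by ring, sin_add_pi, sin_pi_div_two]

theorem strictAntiOn_sin : StrictAntiOn sin (Icc (π / 2) (3 * π / 2)) := by
  intro a ha b hb hab
  rw [← cos_sub_pi_div_two a, ← cos_sub_pi_div_two b]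
  exact strictAntiOn_cos ⟨by linarith [ha.1], by linarith [ha.2]⟩
    ⟨by linarith [hb.1], by linarith [hb.2]⟩ (by linarith)

theorem pi_mem_Icc_pi_div_two : π ∈ Icc (π / 2) (3 * π / 2) :=
  ⟨by linarith [pi_pos], by linarith [pi_pos]⟩

theorem sin_nonneg_iff_le_pi {θ : ℝ} (hθ : θ ∈ Icc (π / 2) (3 * π / 2)) : 0 ≤ sin θ ↔ θ ≤ π := by
  rw [← sin_pi, strictAntiOn_sin.le_iff_ge pi_mem_Icc_pi_div_two hθ]

theorem cos_neg_of_mem_Ioo {θ : ℝ} (hθ : θ ∈ Ioo (π / 2) (3 * π / 2)) : cos θ < 0 :=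
  cos_neg_of_pi_div_two_lt_of_lt hθ.1 (by linarith [hθ.2])

/-- At time `t` the curve lies above the axis of reflection `y = 0` and moves towards the axis of
rotation `x = 0`. -/
def LeftwardAbove (y θ : ℝ → ℝ) (t : ℝ) : Prop := 0 < y t ∧ θ t ∈ Ioo (π / 2) (3 * π / 2)

variable {lam : ℝ}

theorem exp_log_div_le_of_le_weight (hlam : 0 < lam) {P x y : ℝ} (hP : 0 < P) (hx : 0 < x)
    (h : P ≤ weight lam x y) : exp (log P / lam) ≤ x := by
  have hlog : log P ≤ lam * log x - (x ^ 2 + y ^ 2) / 4 := (log_le_iff_le_exp hP).2 h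
  rw [← le_log_iff_exp_le hx, div_le_iff₀' hlam]
  linarith [sq_nonneg x, sq_nonneg y]

theorem curvature_deriv_neg (hlam : 0 < lam) {x y θ : ℝ} (hx : 0 < x) (hy : 0 < y)
    (hly : 2 * lam ≤ y ^ 2) (hcos : cos θ < 0) (hsin : 0 < sin θ)
    (hK : curvature lam x y θ ≤ 0) :
    curvature lam x y θ * ((x * cos θ + y * sin θ) / 2 - lam * cos θ / x)
      + lam * cos θ * sin θ / x ^ 2 < 0 := by
  have hradial : 0 ≤ x * cos θ + y * sin θ := by
    have hmul : x * curvature lam x y θ ≤ 0 := mul_nonpos_of_nonneg_of_nonpos hx.le hK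
    have hexp : x * curvature lam x y θ =
        (x ^ 2 / 2 - lam) * sin θ - x * y / 2 * cos θ := by
      simp only [curvature]; field_simp
    refine nonneg_of_mul_nonneg_right (a := y) ?_ hy
    nlinarith [mul_nonneg (sub_nonneg.2 hly) hsin.le, mul_nonneg (sq_nonneg x) hsin.le]
  have hlc : lam * cos θ < 0 := mul_neg_of_pos_of_neg hlam hcos
  have hdiv : lam * cos θ / x < 0 := div_neg_of_neg_of_pos hlc hx
  have hlast : lam * cos θ * sin θ / x ^ 2 < 0 :=
    div_neg_of_neg_of_pos (mul_neg_of_neg_of_pos hlc hsin) (by positivity)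
  nlinarith

theorem neg_sin_le_mul_curvature (hlam : 0 < lam) {x X y θ : ℝ} (hx : 0 < x) (hxX : x ≤ X)
    (hX : X ^ 2 ≤ lam) (hy : 0 ≤ y) (hcos : cos θ ≤ 0) (hsin : sin θ ≤ 0) :
    -sin θ ≤ 2 * X / lam * curvature lam x y θ := by
  have hX0 : 0 < X := hx.trans_le hxX
  have hcoef : lam / (2 * X) ≤ lam / x - x / 2 := by
    have hle : lam / X ≤ lam / x := by gcongr
    have hX' : X ≤ lam / X := by rw [le_div_iff₀ hX0]; nlinarith
    have hhalf : lam / (2 * X) = lam / X / 2 := by field_simp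
    linarith
  calc -sin θ = 2 * X / lam * (lam / (2 * X) * -sin θ) := by field_simp
    _ ≤ 2 * X / lam * ((lam / x - x / 2) * -sin θ + y / 2 * -cos θ) := by
        gcongr
        have := mul_le_mul_of_nonneg_right hcoef (neg_nonneg.2 hsin)
        have := mul_nonneg (half_pos zero_lt_one).le (mul_nonneg hy (neg_nonneg.2 hcos))
        linarith
    _ = _ := by simp only [curvature]; ring

namespace DirectedGeodesic

variable {x y θ : ℝ → ℝ} {s t : ℝ}

theorem weight_mul_sin_lt (h : DirectedGeodesic lam x y θ) (hst : s < t)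
    (hy : ∀ u ∈ Ioo s t, 0 < y u) :
    weight lam (x t) (y t) * sin (θ t) < weight lam (x s) (y s) * sin (θ s) :=
  lt_of_hasDerivAt_neg_Ioo h.hasDerivAt_weight_mul_sin hst fun u hu ↦
    neg_neg_of_pos <| mul_pos (mul_pos (h.speed_pos u) (half_pos (hy u hu))) (weight_pos _ _ _)

theorem sin_neg_of_sin_nonpos (h : DirectedGeodesic lam x y θ) (hst : s < t)
    (hy : ∀ u ∈ Ioo s t, 0 < y u) (hs : sin (θ s) ≤ 0) : sin (θ t) < 0 :=
  neg_of_mul_neg_right ((h.weight_mul_sin_lt hst hy).trans_le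
    (mul_nonpos_of_nonneg_of_nonpos (weight_pos _ _ _).le hs)) (weight_pos _ _ _).le

theorem sin_pos_of_sin_nonneg (h : DirectedGeodesic lam x y θ) (hst : s < t)
    (hy : ∀ u ∈ Ioo s t, 0 < y u) (ht : 0 ≤ sin (θ t)) : 0 < sin (θ s) :=
  not_le.1 fun hs ↦ (h.sin_neg_of_sin_nonpos hst hy hs).not_ge ht

theorem x_lt_of_leftward (h : DirectedGeodesic lam x y θ) (hst : s < t)
    (hθ : ∀ u ∈ Ioo s t, θ u ∈ Ioo (π / 2) (3 * π / 2)) : x t < x s :=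
  lt_of_hasDerivAt_neg_Ioo h.hasDerivAt_x hst fun u hu ↦
    mul_neg_of_pos_of_neg (h.speed_pos u) (cos_neg_of_mem_Ioo (hθ u hu))

theorem x_le_of_leftward (h : DirectedGeodesic lam x y θ) (hst : s ≤ t)
    (hθ : ∀ u ∈ Ioo s t, θ u ∈ Ioo (π / 2) (3 * π / 2)) : x t ≤ x s :=
  hst.eq_or_lt.elim (fun hst ↦ hst ▸ le_rfl) fun hst ↦ (h.x_lt_of_leftward hst hθ).le

theorem y_le_of_sin_nonneg (h : DirectedGeodesic lam x y θ) (hst : s ≤ t)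
    (hsin : ∀ u ∈ Ioo s t, 0 ≤ sin (θ u)) : y s ≤ y t :=
  le_of_hasDerivAt_nonneg_Ioo h.hasDerivAt_y hst fun u hu ↦
    mul_nonneg (h.speed_pos u).le (hsin u hu)

theorem y_le_of_sin_nonpos (h : DirectedGeodesic lam x y θ) (hst : s ≤ t)
    (hsin : ∀ u ∈ Ioo s t, sin (θ u) ≤ 0) : y t ≤ y s :=
  le_of_hasDerivAt_nonpos_Ioo h.hasDerivAt_y hst fun u hu ↦
    mul_nonpos_of_nonneg_of_nonpos (h.speed_pos u).le (hsin u hu)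

theorem exists_pos_le_x_of_sin_neg (h : DirectedGeodesic lam x y θ) (hlam : 0 < lam)
    (hy : ∀ t > s, 0 < y t) (hs : sin (θ s) < 0) : ∃ d > 0, ∀ t ≥ s, d ≤ x t := by
  set P := -(weight lam (x s) (y s) * sin (θ s)) with hP
  have hP0 : 0 < P := neg_pos.2 (mul_neg_of_pos_of_neg (weight_pos _ _ _) hs)
  have hweight (t : ℝ) (ht : s ≤ t) : P ≤ weight lam (x t) (y t) := by
    have hmom : weight lam (x t) (y t) * sin (θ t) ≤ -P := by
      rw [hP, neg_neg]
      rcases ht.eq_or_lt with rfl | hst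
      · exact le_rfl
      · exact (h.weight_mul_sin_lt hst fun u hu ↦ hy u hu.1).le
    nlinarith [weight_pos lam (x t) (y t), neg_one_le_sin (θ t)]
  exact ⟨exp (log P / lam), exp_pos _, fun t ht ↦
    exp_log_div_le_of_le_weight hlam hP0 (h.pos t) (hweight t ht)⟩

theorem sin_pos_of_forall_leftwardAbove (h : DirectedGeodesic lam x y θ) (hlam : 0 < lam)
    (hΩ : ∀ t > 0, LeftwardAbove y θ t) (ht : 0 < t) : 0 < sin (θ t) := by
  by_contra! hn
  obtain ⟨s, hts⟩ := exists_gt t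
  have hs0 := ht.trans hts
  have hs := h.sin_neg_of_sin_nonpos hts (fun u hu ↦ (hΩ u (ht.trans hu.1)).1) hn
  have hsin (u : ℝ) (hu : s < u) : sin (θ u) < 0 :=
    h.sin_neg_of_sin_nonpos hu (fun v hv ↦ (hΩ v (hs0.trans hv.1)).1) hs.le
  obtain ⟨d, hd, hdx⟩ := h.exists_pos_le_x_of_sin_neg hlam (fun u hu ↦ (hΩ u (hs0.trans hu)).1) hs
  have hgrow (u : ℝ) (hu : s < u) : d / ((1 + x s ^ 2) * (1 + y s ^ 2)) ≤
      -(speed (x u) (y u) * cos (θ u) + speed (x u) (y u) * sin (θ u)) := by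
    have hspeed := le_speed hd (hdx u hu.le)
      (h.x_le_of_leftward hu.le fun v hv ↦ (hΩ v (hs0.trans hv.1)).2) (hΩ u (hs0.trans hu)).1.le
      (h.y_le_of_sin_nonpos hu.le fun v hv ↦ (hsin v hv.1).le)
    have hone : 1 ≤ -(cos (θ u) + sin (θ u)) := by
      nlinarith [sin_sq_add_cos_sq (θ u), hsin u hu,
        cos_neg_of_mem_Ioo (hΩ u (hs0.trans hu)).2]
    nlinarith [h.speed_pos u]
  obtain ⟨u, hu, hlt⟩ := exists_lt_of_forall_le_hasDerivAt
    (fun u ↦ ((h.hasDerivAt_x u).add (h.hasDerivAt_y u)).neg) (by positivity) hgrow 0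
  simp only [Pi.neg_apply, Pi.add_apply] at hlt
  linarith [h.pos u, (hΩ u (hs0.trans_le hu)).1]

theorem y_le_of_cos_le (h : DirectedGeodesic lam x y θ) {c : ℝ} (hc : c < 0) (hst : s ≤ t)
    (hcos : ∀ u ∈ Ioo s t, cos (θ u) ≤ c) : y t ≤ y s + x s / -c := by
  have hanti := le_of_hasDerivAt_nonpos_Ioo
    (fun u ↦ (h.hasDerivAt_x u).add ((h.hasDerivAt_y u).const_mul (-c))) hst fun u hu ↦ by
      have hsin : -c * sin (θ u) ≤ -c := mul_le_of_le_one_right (by linarith) (sin_le_one _)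
      nlinarith [h.speed_pos u, hcos u hu]
  simp only [Pi.add_apply] at hanti
  rw [← sub_le_iff_le_add', le_div_iff₀ (neg_pos.2 hc)]
  linarith [h.pos t]

theorem y_le_of_curvature_le (h : DirectedGeodesic lam x y θ) {k : ℝ} (hk : k < 0) (hst : s ≤ t)
    (hsin : ∀ u ∈ Ioo s t, 0 ≤ sin (θ u))
    (hK : ∀ u ∈ Ioo s t, curvature lam (x u) (y u) (θ u) ≤ k) : y t ≤ y s + 2 / -k := by
  have hanti := le_of_hasDerivAt_nonpos_Ioo
    (fun u ↦ (h.hasDerivAt_cos u).neg.add ((h.hasDerivAt_y u).const_mul (-k))) hst fun u hu ↦ by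
      nlinarith [mul_nonneg (h.speed_pos u).le (hsin u hu), hK u hu]
  simp only [Pi.add_apply, Pi.neg_apply] at hanti
  rw [← sub_le_iff_le_add', le_div_iff₀ (neg_pos.2 hk)]
  linarith [neg_one_le_cos (θ s), cos_le_one (θ t)]

theorem curvature_nonpos_of_curvature_nonpos (h : DirectedGeodesic lam x y θ) (hlam : 0 < lam)
    (hst : s ≤ t) (hcos : ∀ u ∈ Ico s t, cos (θ u) < 0) (hsin : ∀ u ∈ Ico s t, 0 < sin (θ u))
    (hs : curvature lam (x s) (y s) (θ s) ≤ 0) : curvature lam (x t) (y t) (θ t) ≤ 0 := by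
  refine image_le_of_deriv_right_lt_deriv_boundary
    (fun u _ ↦ (h.hasDerivAt_curvature u).continuousAt.continuousWithinAt)
    (fun u _ ↦ (h.hasDerivAt_curvature u).hasDerivWithinAt) (B := fun _ ↦ 0) (B' := fun _ ↦ 0)
    hs (fun u ↦ hasDerivAt_const u 0) (fun u hu hu0 ↦ ?_) (right_mem_Icc.2 hst)
  rw [hu0, zero_mul, zero_add]
  exact mul_neg_of_pos_of_neg (h.speed_pos u) <| div_neg_of_neg_of_pos
    (mul_neg_of_neg_of_pos (mul_neg_of_pos_of_neg hlam (hcos u hu)) (hsin u hu))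
    (pow_pos (h.pos u) 2)

theorem exists_bound_y_of_curvature_pos (h : DirectedGeodesic lam x y θ) (hlam : 0 < lam)
    (hΩ : ∀ t > 0, LeftwardAbove y θ t) (hs : 0 < s)
    (hK : ∀ t ≥ s, 0 < curvature lam (x t) (y t) (θ t)) : ∃ M, ∀ t ≥ s, y t ≤ M := by
  refine ⟨_, fun t ht ↦ h.y_le_of_cos_le (cos_neg_of_mem_Ioo (hΩ s hs).2) ht fun u hu ↦ ?_⟩
  have hu0 := hs.trans hu.1
  refine cos_le_cos_of_nonneg_of_le_pi (by linarith [(hΩ s hs).2.1, pi_pos]) ?_ ?_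
  · exact (sin_nonneg_iff_le_pi (Ioo_subset_Icc_self (hΩ u hu0).2)).1
      (h.sin_pos_of_forall_leftwardAbove hlam hΩ hu0).le
  · exact le_of_hasDerivAt_nonneg_Ioo h.hasDerivAt_θ hu.1.le fun v hv ↦
      (mul_pos (h.speed_pos v) (hK v hv.1.le)).le

theorem exists_bound_y_of_curvature_nonpos (h : DirectedGeodesic lam x y θ) (hlam : 0 < lam)
    (hΩ : ∀ t > 0, LeftwardAbove y θ t) (hs : 0 < s) (hsy : 2 * lam ≤ y s ^ 2)
    (hK : ∀ t ≥ s, curvature lam (x t) (y t) (θ t) ≤ 0) : ∃ a > 0, ∃ M, ∀ t ≥ a, y t ≤ M := by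
  have hsin (t : ℝ) (ht : 0 < t) := h.sin_pos_of_forall_leftwardAbove hlam hΩ ht
  have hK' (t : ℝ) (ht : s ≤ t) := by
    have ht0 := hs.trans_le ht
    have hyt : y s ≤ y t := h.y_le_of_sin_nonneg ht fun u hu ↦ (hsin u (hs.trans hu.1)).le
    have hsy' := pow_le_pow_left₀ (hΩ s hs).1.le hyt 2
    exact mul_neg_of_pos_of_neg (h.speed_pos t) <| curvature_deriv_neg hlam (h.pos t)
      (hΩ t ht0).1 (hsy.trans hsy') (cos_neg_of_mem_Ioo (hΩ t ht0).2) (hsin t ht0) (hK t ht)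
  obtain ⟨a, hsa⟩ := exists_gt s
  have ha : curvature lam (x a) (y a) (θ a) < 0 :=
    (lt_of_hasDerivAt_neg_Ioo h.hasDerivAt_curvature hsa fun u hu ↦ hK' u hu.1.le).trans_le
      (hK s le_rfl)
  refine ⟨a, hs.trans hsa, _, fun t ht ↦ h.y_le_of_curvature_le ha ht
    (fun u hu ↦ (hsin u (hs.trans (hsa.trans hu.1))).le) fun u hu ↦ ?_⟩
  exact le_of_hasDerivAt_nonpos_Ioo h.hasDerivAt_curvature hu.1.le fun v hv ↦
    (hK' v (hsa.trans hv.1).le).le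

theorem exists_bound_y_of_forall_leftwardAbove (h : DirectedGeodesic lam x y θ) (hlam : 0 < lam)
    (hΩ : ∀ t > 0, LeftwardAbove y θ t) : ∃ a > 0, ∃ M, ∀ t ≥ a, y t ≤ M := by
  by_cases! hpos : ∀ t ≥ 1, 0 < curvature lam (x t) (y t) (θ t)
  · exact ⟨1, one_pos, h.exists_bound_y_of_curvature_pos hlam hΩ one_pos hpos⟩
  obtain ⟨s, hs, hKs⟩ := hpos
  have hs0 : 0 < s := one_pos.trans_le hs
  by_cases! hy : ∀ t ≥ s, y t ≤ 1 + 2 * lam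
  · exact ⟨s, hs0, _, hy⟩
  obtain ⟨u, hsu, hyu⟩ := hy
  refine h.exists_bound_y_of_curvature_nonpos hlam hΩ (hs0.trans_le hsu) (by nlinarith)
    fun t ht ↦ h.curvature_nonpos_of_curvature_nonpos hlam (hsu.trans ht) ?_ ?_ hKs
  · exact fun v hv ↦ cos_neg_of_mem_Ioo (hΩ v (hs0.trans_le hv.1)).2
  · exact fun v hv ↦ h.sin_pos_of_forall_leftwardAbove hlam hΩ (hs0.trans_le hv.1)

theorem exists_x_lt_of_forall_leftwardAbove (h : DirectedGeodesic lam x y θ) (hlam : 0 < lam)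
    (hΩ : ∀ t > 0, LeftwardAbove y θ t) {δ : ℝ} (hδ : 0 < δ) : ∃ t > 0, x t < δ := by
  by_contra! hx
  obtain ⟨a, ha, M, hM⟩ := h.exists_bound_y_of_forall_leftwardAbove hlam hΩ
  have hgrow (t : ℝ) (ht : a < t) : δ / ((1 + x a ^ 2) * (1 + M ^ 2)) ≤
      speed (x t) (y t) * sin (θ t) - speed (x t) (y t) * cos (θ t) := by
    have ht0 := ha.trans ht
    have hspeed := le_speed hδ (hx t ht0)
      (h.x_le_of_leftward ht.le fun u hu ↦ (hΩ u (ha.trans hu.1)).2) (hΩ t ht0).1.le (hM t ht.le)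
    have hone : 1 ≤ sin (θ t) - cos (θ t) := by
      nlinarith [sin_sq_add_cos_sq (θ t), h.sin_pos_of_forall_leftwardAbove hlam hΩ ht0,
        cos_neg_of_mem_Ioo (hΩ t ht0).2]
    nlinarith [h.speed_pos t]
  obtain ⟨t, ht, hlt⟩ := exists_lt_of_forall_le_hasDerivAt
    (fun t ↦ (h.hasDerivAt_y t).sub (h.hasDerivAt_x t)) (by positivity) hgrow M
  simp only [Pi.sub_apply] at hlt
  linarith [h.pos t, hM t ht]

theorem y_pos_of_theta_eq_pi (h : DirectedGeodesic lam x y θ) (hlam : 0 < lam) (hst : s ≤ t)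
    (hθs : θ s = π) (hθ : ∀ u ∈ Icc s t, θ u ∈ Ioo (π / 2) (3 * π / 2))
    (hy : ∀ u ∈ Ico s t, 0 < y u) (hx : x s ^ 2 ≤ lam) (hxy : π * x s < lam * y s) :
    0 < y t := by
  have hmono := le_of_hasDerivAt_nonneg_Ioo
    (fun u ↦ (h.hasDerivAt_y u).add ((h.hasDerivAt_θ u).const_mul (2 * x s / lam))) hst
    fun u hu ↦ by
      have hsin : sin (θ u) < 0 := h.sin_neg_of_sin_nonpos hu.1
        (fun v hv ↦ hy v ⟨hv.1.le, hv.2.trans hu.2⟩) (by rw [hθs, sin_pi])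
      have := neg_sin_le_mul_curvature hlam (h.pos u)
        (h.x_le_of_leftward hu.1.le fun v hv ↦ hθ v ⟨hv.1.le, hv.2.le.trans hu.2.le⟩) hx
        (hy u ⟨hu.1.le, hu.2⟩).le (cos_neg_of_mem_Ioo (hθ u ⟨hu.1.le, hu.2.le⟩)).le hsin.le
      nlinarith [h.speed_pos u]
  simp only [Pi.add_apply, hθs] at hmono
  have hturn : 2 * x s / lam * (θ t - π) < y s := by
    calc 2 * x s / lam * (θ t - π) ≤ 2 * x s / lam * (π / 2) := by
          have := (h.pos s).le
          gcongr
          linarith [(hθ t (right_mem_Icc.2 hst)).2]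
      _ = π * x s / lam := by ring
      _ < y s := by rwa [div_lt_iff₀' hlam]
  linarith

theorem y_pos_of_near_axis (h : DirectedGeodesic lam x y θ) (hlam : 0 < lam) (hst : s ≤ t)
    (hθ : ∀ u ∈ Icc s t, θ u ∈ Ioo (π / 2) (3 * π / 2)) (hys : 0 < y s) (hsin : 0 ≤ sin (θ s))
    (hx : x s ^ 2 ≤ lam) (hxy : π * x s < lam * y s) : 0 < y t := by
  by_contra! hyt
  obtain ⟨e, he, hye, hpos⟩ := exists_first_mem_Icc
    (isClosed_le h.continuous_y continuous_const) hst hyt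
  simp only [mem_ofPred_eq, not_le] at hye hpos
  have hθe {u : ℝ} (hu : u ∈ Icc s e) : θ u ∈ Ioo (π / 2) (3 * π / 2) :=
    hθ u ⟨hu.1, hu.2.trans he.2⟩
  obtain ⟨v, hv, hsinv⟩ : ∃ v ∈ Icc s e, sin (θ v) < 0 := by
    by_contra! hsin'
    exact (hys.trans_le (h.y_le_of_sin_nonneg he.1 fun u hu ↦
      hsin' u (Ioo_subset_Icc_self hu))).not_ge hye
  have hθs : θ s ≤ π :=
    (sin_nonneg_iff_le_pi (Ioo_subset_Icc_self (hθe (left_mem_Icc.2 he.1)))).1 hsin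
  have hθv : π ≤ θ v := (not_le.1 fun hle ↦
    hsinv.not_ge ((sin_nonneg_iff_le_pi (Ioo_subset_Icc_self (hθe hv))).2 hle)).le
  obtain ⟨w, hw, hθw⟩ := intermediate_value_Icc hv.1 h.continuous_θ.continuousOn ⟨hθs, hθv⟩
  have hwe : w ≤ e := hw.2.trans hv.2
  have hyw : y s ≤ y w := h.y_le_of_sin_nonneg hw.1 fun u hu ↦
    (h.sin_pos_of_sin_nonneg hu.2 (fun r hr ↦ hpos r ⟨(hu.1.trans hr.1).le, hr.2.trans_le hwe⟩)
      (by rw [hθw, sin_pi])).le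
  have hxw : x w ≤ x s := h.x_le_of_leftward hw.1 fun u hu ↦ hθe ⟨hu.1.le, hu.2.le.trans hwe⟩
  refine (h.y_pos_of_theta_eq_pi hlam hwe hθw (fun u hu ↦ hθe ⟨hw.1.trans hu.1, hu.2⟩)
    (fun u hu ↦ hpos u ⟨hw.1.trans hu.1, hu.2⟩) ?_ ?_).not_ge hye
  · exact (pow_le_pow_left₀ (h.pos w).le hxw 2).trans hx
  · nlinarith [pi_pos]

end DirectedGeodesic

end LeftwardMotion

section ShotOutcomes

variable {lam : ℝ}

theorem exists_directedGeodesic_vertical {c : ℝ} (hc : 0 < c) (hc2 : c ^ 2 = 2 * lam) {θ₀ : ℝ}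
    (hθ : cos θ₀ = 0) (t₀ y₀ : ℝ) :
    ∃ y, y t₀ = y₀ ∧ DirectedGeodesic lam (fun _ ↦ c) y fun _ ↦ θ₀ := by
  have hbdd : BoundedLipschitz fun y ↦ speed c y * sin θ₀ :=
    ((BoundedLipschitz.const _).mul .one_div_one_add_sq).mul (.const _)
  obtain ⟨y, hy₀, hy⟩ := hbdd.exists_hasDerivAt t₀ y₀
  refine ⟨y, hy₀, fun _ ↦ hc, fun t ↦ ?_, hy, fun t ↦ ?_⟩
  · simpa only [hθ, mul_zero] using hasDerivAt_const t c
  · have hcurv : curvature lam c (y t) θ₀ = 0 := by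
      simp only [curvature, hθ, mul_zero, sub_zero]
      field_simp
      simp only [hc2, sub_self, zero_mul, mul_zero]
    simpa only [hcurv, mul_zero] using hasDerivAt_const t θ₀

theorem exists_directedGeodesic_circle {r : ℝ} (hr : 0 < r) (hr2 : r ^ 2 = 2 * (lam + 1)) :
    ∃ φ : ℝ → ℝ, φ 0 = 0 ∧ DirectedGeodesic lam (fun t ↦ r * cos (φ t)) (fun t ↦ r * sin (φ t))
      fun t ↦ φ t + π / 2 := by
  have hlip {f : ℝ → ℝ} (hf : LipschitzWith 1 f) : LipschitzWith ‖r‖₊ fun φ ↦ r * f φ := by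
    simpa [Function.comp_def] using (lipschitzWith_smul r).comp hf
  have hbdd : BoundedLipschitz fun φ ↦ speed (r * cos φ) (r * sin φ) * (1 / r) :=
    ((BoundedLipschitz.div_one_add_sq.comp (hlip lipschitzWith_cos)).mul
      (BoundedLipschitz.one_div_one_add_sq.comp (hlip lipschitzWith_sin))).mul (.const _)
  obtain ⟨φ, hφ₀, hφ⟩ := hbdd.exists_hasDerivAt 0 0
  have hγ (t : ℝ) : HasDerivAt (fun t ↦ (r * cos (φ t), r * sin (φ t), φ t + π / 2))
      (vectorField lam (r * cos (φ t), r * sin (φ t), φ t + π / 2)) t := by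
    refine (((hφ t).cos.const_mul r).prodMk (((hφ t).sin.const_mul r).prodMk
      ((hφ t).add_const (π / 2)))).congr_deriv ?_
    rw [vectorField, Prod.mk.injEq, Prod.mk.injEq, cos_add_pi_div_two, sin_add_pi_div_two]
    refine ⟨by field_simp, by field_simp, ?_⟩
    simp only [speed]
    field_simp
    linear_combination (-r ^ 2 * cos (φ t)) * sin_sq_add_cos_sq (φ t) - cos (φ t) * hr2
  exact ⟨φ, hφ₀, .of_hasDerivAt_vectorField hγ (by simpa [hφ₀] using hr)⟩

/-- A directed geodesic leaving the axis of reflection `y = 0` orthogonally at the point `(R, 0)`.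
-/
structure OrthogonalShot (lam R : ℝ) (x y θ : ℝ → ℝ) : Prop extends
    DirectedGeodesic lam x y θ where
  x_zero : x 0 = R
  y_zero : y 0 = 0
  θ_zero : θ 0 = π / 2

/-- `t` is the first positive time at which `LeftwardAbove` fails. -/
structure LeavesAt (y θ : ℝ → ℝ) (t : ℝ) : Prop where
  pos : 0 < t
  leftwardAbove : ∀ s ∈ Ioo 0 t, LeftwardAbove y θ s
  not_leftwardAbove : ¬ LeftwardAbove y θ t

/-- The curve moves leftward until it has crossed the axis of reflection `y = 0`. -/
def CrossesAxis (y θ : ℝ → ℝ) : Prop :=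
  ∃ τ > 0, y τ < 0 ∧ ∀ t ∈ Ioc 0 τ, θ t ∈ Ioo (π / 2) (3 * π / 2)

/-- The curve returns orthogonally to the axis of reflection `y = 0`; its mirror image then closes
it up. -/
def MeetsAxisOrthogonally (y θ : ℝ → ℝ) : Prop :=
  ∃ l, LeavesAt y θ l ∧ y l = 0 ∧ θ l = 3 * π / 2

/-- Before its first return to the axis of reflection the curve either turns back to the right or
gets so close to the axis of rotation that it is bound to turn back before crossing `y = 0`; see
`DirectedGeodesic.y_pos_of_near_axis`. -/
def Obstructed (lam : ℝ) (x y θ : ℝ → ℝ) : Prop :=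
  ∃ τ > 0, (∀ t ∈ Ioc 0 τ, 0 < y t) ∧ (θ τ ∉ Icc (π / 2) (3 * π / 2) ∨
    0 < sin (θ τ) ∧ x τ ^ 2 < lam ∧ π * x τ < lam * y τ)

section

variable {x y θ : ℝ → ℝ} {s t : ℝ}

theorem isOpen_setOf_leftwardAbove (hy : Continuous y) (hθ : Continuous θ) :
    IsOpen {t | LeftwardAbove y θ t} :=
  (isOpen_lt continuous_const hy).inter (isOpen_Ioo.preimage hθ)

theorem forall_leftwardAbove_or_exists_leavesAt (hy : Continuous y) (hθ : Continuous θ)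
    (h₀ : ∀ᶠ t in 𝓝[>] 0, LeftwardAbove y θ t) :
    (∀ t > 0, LeftwardAbove y θ t) ∨ ∃ t, LeavesAt y θ t := by
  refine or_iff_not_imp_left.2 fun hnot ↦ ?_
  push Not at hnot
  obtain ⟨b, hb, hbnot⟩ := hnot
  obtain ⟨ε, hε, hεΩ⟩ := mem_nhdsGT_iff_exists_Ioc_subset.1 h₀
  have hεb : ε ≤ b := not_lt.1 fun hlt ↦ hbnot (hεΩ ⟨hb, hlt.le⟩)
  obtain ⟨t, ht, htnot, hbefore⟩ := exists_first_mem_Icc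
    (isOpen_setOf_leftwardAbove hy hθ).isClosed_compl hεb hbnot
  refine ⟨t, lt_of_lt_of_le hε ht.1, fun s hs ↦ ?_, htnot⟩
  rcases le_or_gt s ε with hsε | hsε
  · exact hεΩ ⟨hs.1, hsε⟩
  · exact not_not.1 (hbefore s ⟨hsε.le, hs.2⟩)

namespace LeavesAt

theorem y_nonneg_and_θ_mem (h : LeavesAt y θ t) (hy : Continuous y) (hθ : Continuous θ) :
    0 ≤ y t ∧ θ t ∈ Icc (π / 2) (3 * π / 2) := by
  have hsub : closure (Ioo 0 t) ⊆ {s | 0 ≤ y s} ∩ θ ⁻¹' Icc (π / 2) (3 * π / 2) :=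
    closure_minimal (fun s hs ↦ ⟨(h.leftwardAbove s hs).1.le,
      Ioo_subset_Icc_self (h.leftwardAbove s hs).2⟩)
      ((isClosed_le continuous_const hy).inter (isClosed_Icc.preimage hθ))
  rw [closure_Ioo h.pos.ne] at hsub
  exact hsub (right_mem_Icc.2 h.pos.le)

theorem sin_neg (h : LeavesAt y θ t) (hg : DirectedGeodesic lam x y θ) (hy : y t ≤ 0) :
    sin (θ t) < 0 := by
  by_contra! hsin
  obtain ⟨s, hs⟩ := exists_between h.pos
  have hmono := hg.y_le_of_sin_nonneg hs.2.le fun u hu ↦ (hg.sin_pos_of_sin_nonneg hu.2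
    (fun v hv ↦ (h.leftwardAbove v ⟨hs.1.trans (hu.1.trans hv.1), hv.2⟩).1) hsin).le
  linarith [(h.leftwardAbove s hs).1]

theorem crossesAxis (h : LeavesAt y θ t) (hg : DirectedGeodesic lam x y θ) (hy : y t = 0)
    (hθ : θ t ≠ 3 * π / 2) : CrossesAxis y θ := by
  have hsin := h.sin_neg hg hy.le
  have hmem := (h.y_nonneg_and_θ_mem hg.continuous_y hg.continuous_θ).2
  have hθ' : θ t ≠ π / 2 := fun h ↦ by norm_num [h] at hsin
  have hnhds : ∀ᶠ s in 𝓝 t, θ s ∈ Ioo (π / 2) (3 * π / 2) ∧ sin (θ s) < 0 :=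
    (hg.continuous_θ.continuousAt.eventually_mem
      (Ioo_mem_nhds (hmem.1.lt_of_ne' hθ') (hmem.2.lt_of_ne hθ))).and
    ((hg.hasDerivAt_sin t).continuousAt.eventually_lt_const hsin)
  obtain ⟨τ, htτ, hτ⟩ := mem_nhdsGE_iff_exists_Icc_subset.1 (nhdsWithin_le_nhds hnhds)
  refine ⟨τ, h.pos.trans htτ, ?_, fun s hs ↦ ?_⟩
  · refine (lt_of_hasDerivAt_neg_Ioo hg.hasDerivAt_y htτ fun s hs ↦ ?_).trans_eq hy
    exact mul_neg_of_pos_of_neg (hg.speed_pos s) (hτ (Ioo_subset_Icc_self hs)).2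
  · rcases lt_or_ge s t with hst | hst
    · exact (h.leftwardAbove s ⟨hs.1, hst⟩).2
    · exact (hτ ⟨hst, hs.2⟩).1

theorem cos_eq_zero (h : LeavesAt y θ t) (hθ : θ t ∈ Icc (π / 2) (3 * π / 2)) (hy : 0 < y t) :
    cos (θ t) = 0 := by
  by_contra hcos
  refine h.not_leftwardAbove ⟨hy, hθ.1.lt_of_ne fun h ↦ hcos ?_, hθ.2.lt_of_ne fun h ↦ hcos ?_⟩
  · rw [← h, cos_pi_div_two]
  · rw [h, cos_three_pi_div_two]

theorem obstructed (h : LeavesAt y θ t) (hg : DirectedGeodesic lam x y θ) (hy : 0 < y t)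
    (hK : curvature lam (x t) (y t) (θ t) ≠ 0) : Obstructed lam x y θ := by
  have hnotMem : ∀ᶠ s in 𝓝[>] t, θ s ∉ Icc (π / 2) (3 * π / 2) := by
    refine eventually_nhdsGT_notMem_Icc (hg.hasDerivAt_θ t) (mul_ne_zero (hg.speed_pos t).ne' hK)
      ?_ fun hθ ↦ h.not_leftwardAbove ⟨hy, hθ⟩
    filter_upwards [Ioo_mem_nhdsLT h.pos] with s hs using (h.leftwardAbove s hs).2
  have hpos : ∀ᶠ s in 𝓝[>] t, 0 < y s :=
    nhdsWithin_le_nhds (hg.continuous_y.continuousAt.eventually_const_lt hy)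
  obtain ⟨τ, htτ, hτ⟩ := mem_nhdsGT_iff_exists_Ioc_subset.1 (hnotMem.and hpos)
  refine ⟨τ, h.pos.trans htτ, fun s hs ↦ ?_, .inl (hτ ⟨htτ, le_rfl⟩).1⟩
  rcases lt_trichotomy s t with hst | rfl | hst
  · exact (h.leftwardAbove s ⟨hs.1, hst⟩).1
  · exact hy
  · exact (hτ ⟨hst, hs.2⟩).2

end LeavesAt

namespace DirectedGeodesic

theorem curvature_ne_zero_of_cos_eq_zero (h : DirectedGeodesic lam x y θ)
    (hx : x s ^ 2 ≠ 2 * lam) (hcos : cos (θ t) = 0) :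
    curvature lam (x t) (y t) (θ t) ≠ 0 := by
  intro hK
  have hsin : sin (θ t) ≠ 0 := fun hsin ↦ by simpa [hsin, hcos] using sin_sq_add_cos_sq (θ t)
  have hxt := h.pos t
  have hx2 : x t ^ 2 = 2 * lam := by
    rw [curvature, hcos, mul_zero, sub_zero, mul_eq_zero, or_iff_left hsin] at hK
    field_simp at hK
    linarith
  obtain ⟨y', hy', h'⟩ := exists_directedGeodesic_vertical hxt hx2 hcos t (y t)
  exact hx (by rw [(h.eq_of_eq_at h' rfl hy'.symm rfl s).1, hx2])

theorem obstructed_of_forall_leftwardAbove (h : DirectedGeodesic lam x y θ) (hlam : 0 < lam)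
    (hΩ : ∀ t > 0, LeftwardAbove y θ t) : Obstructed lam x y θ := by
  have hy1 := (hΩ 1 one_pos).1
  obtain ⟨t, ht, hxt⟩ := h.exists_x_lt_of_forall_leftwardAbove hlam hΩ
    (by positivity : 0 < min (min 1 lam) (lam * y 1 / π))
  obtain ⟨⟨hx1, hxlam⟩, hxy⟩ : (x t < 1 ∧ x t < lam) ∧ x t < lam * y 1 / π := by
    simpa only [lt_min_iff] using hxt
  have hxle : x (max 1 t) ≤ x t := h.x_le_of_leftward (le_max_right _ _) fun u hu ↦
    (hΩ u (ht.trans hu.1)).2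
  have hyle : y 1 ≤ y (max 1 t) := h.y_le_of_sin_nonneg (le_max_left _ _) fun u hu ↦
    (h.sin_pos_of_forall_leftwardAbove hlam hΩ (one_pos.trans hu.1)).le
  have hτ : 0 < max 1 t := lt_max_of_lt_right ht
  refine ⟨max 1 t, hτ, fun u hu ↦ (hΩ u hu.1).1,
    .inr ⟨h.sin_pos_of_forall_leftwardAbove hlam hΩ hτ, ?_, ?_⟩⟩
  · nlinarith [h.pos (max 1 t)]
  · rw [lt_div_iff₀' pi_pos] at hxy
    nlinarith [pi_pos]

theorem not_crossesAxis_of_obstructed (h : DirectedGeodesic lam x y θ) (hlam : 0 < lam)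
    (ho : Obstructed lam x y θ) : ¬ CrossesAxis y θ := by
  obtain ⟨τ, hτ, hpos, hτ'⟩ := ho
  rintro ⟨σ, hσ, hyσ, hθ⟩
  have hτσ : τ < σ := not_le.1 fun hle ↦ (hpos σ ⟨hσ, hle⟩).not_gt hyσ
  rcases hτ' with hout | ⟨hsin, hx, hxy⟩
  · exact hout (Ioo_subset_Icc_self (hθ τ ⟨hτ, hτσ.le⟩))
  · exact (h.y_pos_of_near_axis hlam hτσ.le (fun u hu ↦ hθ u ⟨hτ.trans_le hu.1, hu.2⟩)
      (hpos τ ⟨hτ, le_rfl⟩) hsin.le hx.le hxy).not_gt hyσ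

end DirectedGeodesic

theorem eventually_curvature_pos {R : ℝ} (hR₀ : 0 < R) (hR : 2 * lam < R ^ 2) :
    ∀ᶠ p : ℝ × ℝ × ℝ in 𝓝 (R, 0, π / 2),
      0 < curvature lam p.1 p.2.1 p.2.2 ∧ 0 < sin p.2.2 ∧ p.2.2 < 3 * π / 2 := by
  have hcont : ContinuousAt (fun p : ℝ × ℝ × ℝ ↦ curvature lam p.1 p.2.1 p.2.2) (R, 0, π / 2) := by
    unfold curvature
    fun_prop (disch := exact hR₀.ne')
  have hpos : 0 < curvature lam R 0 (π / 2) := by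
    have : lam / R < R / 2 := by rw [div_lt_div_iff₀ hR₀ two_pos]; linarith [sq R]
    simp only [curvature, sin_pi_div_two]
    linarith
  have hsin : ContinuousAt (fun p : ℝ × ℝ × ℝ ↦ sin p.2.2) (R, 0, π / 2) := by fun_prop
  have hθ : ContinuousAt (fun p : ℝ × ℝ × ℝ ↦ p.2.2) (R, 0, π / 2) := by fun_prop
  exact (hcont.eventually_const_lt hpos).and ((hsin.eventually_const_lt (by simp)).and
    (hθ.eventually_lt_const (by linarith [pi_pos])))

namespace OrthogonalShot

variable {R : ℝ}

theorem leftwardAbove_of_curvature_pos (h : OrthogonalShot lam R x y θ) (ht : 0 < t)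
    (hK : ∀ s ∈ Icc 0 t, 0 < curvature lam (x s) (y s) (θ s) ∧ 0 < sin (θ s) ∧
      θ s < 3 * π / 2) : LeftwardAbove y θ t := by
  have hy := lt_of_hasDerivAt_pos_Ioo h.hasDerivAt_y ht fun s hs ↦
    mul_pos (h.speed_pos s) (hK s (Ioo_subset_Icc_self hs)).2.1
  have hθ := lt_of_hasDerivAt_pos_Ioo h.hasDerivAt_θ ht fun s hs ↦
    mul_pos (h.speed_pos s) (hK s (Ioo_subset_Icc_self hs)).1
  rw [h.y_zero] at hy
  rw [h.θ_zero] at hθ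
  exact ⟨hy, hθ, (hK t (right_mem_Icc.2 ht.le)).2.2⟩

theorem eventually_leftwardAbove (h : OrthogonalShot lam R x y θ) (hR : 2 * lam < R ^ 2) :
    ∀ᶠ t in 𝓝[>] 0, LeftwardAbove y θ t := by
  have hR₀ : 0 < R := h.x_zero ▸ h.pos 0
  have hcont : Tendsto (fun t ↦ (x t, y t, θ t)) (𝓝 0) (𝓝 (R, 0, π / 2)) := by
    simpa only [h.x_zero, h.y_zero, h.θ_zero] using
      (h.continuous_x.prodMk (h.continuous_y.prodMk h.continuous_θ)).tendsto 0
  obtain ⟨ε, hε, hεK⟩ := mem_nhdsGE_iff_exists_Icc_subset.1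
    (nhdsWithin_le_nhds (hcont.eventually (eventually_curvature_pos hR₀ hR)))
  filter_upwards [Ioc_mem_nhdsGT hε] with t ht
  exact h.leftwardAbove_of_curvature_pos ht.1 fun s hs ↦ hεK ⟨hs.1, hs.2.trans ht.2⟩

theorem crossesAxis_or_meetsAxisOrthogonally_or_obstructed (h : OrthogonalShot lam R x y θ)
    (hlam : 0 < lam) (hR : 2 * lam < R ^ 2) :
    CrossesAxis y θ ∨ MeetsAxisOrthogonally y θ ∨ Obstructed lam x y θ := by
  have hg := h.toDirectedGeodesic
  rcases forall_leftwardAbove_or_exists_leavesAt hg.continuous_y hg.continuous_θ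
    (h.eventually_leftwardAbove hR) with hΩ | ⟨t, ht⟩
  · exact .inr (.inr (hg.obstructed_of_forall_leftwardAbove hlam hΩ))
  obtain ⟨hy, hθ⟩ := ht.y_nonneg_and_θ_mem hg.continuous_y hg.continuous_θ
  rcases hy.eq_or_lt with hy | hy
  · by_cases hθt : θ t = 3 * π / 2
    · exact .inr (.inl ⟨t, ht, hy.symm, hθt⟩)
    · exact .inl (ht.crossesAxis hg hy.symm hθt)
  · exact .inr (.inr (ht.obstructed hg hy (hg.curvature_ne_zero_of_cos_eq_zero (s := 0)
      (h.x_zero ▸ hR.ne') (ht.cos_eq_zero hθ hy))))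

theorem not_crossesAxis_of_sq_eq (h : OrthogonalShot lam R x y θ) (hR : R ^ 2 = 2 * (lam + 1)) :
    ¬ CrossesAxis y θ := by
  have hR₀ : 0 < R := h.x_zero ▸ h.pos 0
  rintro ⟨τ, hτ, hy, hθ⟩
  obtain ⟨φ, hφ₀, hφ⟩ := exists_directedGeodesic_circle hR₀ hR
  obtain ⟨-, hyφ, hθφ⟩ := h.eq_of_eq_at hφ (t₀ := 0) (by simp [hφ₀, h.x_zero])
    (by simp [hφ₀, h.y_zero]) (by simp [hφ₀, h.θ_zero]) τ
  have hθτ := hθ τ ⟨hτ, le_rfl⟩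
  rw [hθφ] at hθτ
  rw [hyφ] at hy
  exact hy.not_ge (mul_nonneg hR₀.le
    (sin_pos_of_pos_of_lt_pi (by linarith [hθτ.1]) (by linarith [hθτ.2])).le)

end OrthogonalShot

end

end ShotOutcomes

section ShootingFamily

/-- The orthogonal shots from all the points of the axis of reflection, depending continuously on
the starting point `(R, 0)`. -/
structure ShootingFamily (lam : ℝ) (X Y T : ℝ → ℝ → ℝ) : Prop where
  shot : ∀ R > 0, OrthogonalShot lam R (X R) (Y R) (T R)
  continuous : Continuous fun p : ℝ × ℝ ↦ (X p.1 p.2, Y p.1 p.2, T p.1 p.2)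

variable {lam : ℝ}

theorem exists_shootingFamily (lam : ℝ) : ∃ X Y T, ShootingFamily lam X Y T := by
  have hv := boundedLipschitz_vectorField lam
  choose Φ hΦ₀ hΦ using hv.exists_hasDerivAt 0
  obtain ⟨K, hK, -⟩ := hv
  refine ⟨fun R t ↦ (Φ (R, 0, π / 2) t).1, fun R t ↦ (Φ (R, 0, π / 2) t).2.1,
    fun R t ↦ (Φ (R, 0, π / 2) t).2.2, fun R hR ↦ ?_, ?_⟩
  · exact ⟨.of_hasDerivAt_vectorField (hΦ _) (by rwa [hΦ₀]), by rw [hΦ₀], by rw [hΦ₀], by rw [hΦ₀]⟩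
  · exact (continuous_flow_of_lipschitzWith hK hΦ₀ hΦ).comp
      (by fun_prop : Continuous fun p : ℝ × ℝ ↦ ((p.1, (0 : ℝ), π / 2), p.2))

namespace ShootingFamily

variable {X Y T : ℝ → ℝ → ℝ} {R₀ τ : ℝ}

theorem tendsto (hF : ShootingFamily lam X Y T) (R t : ℝ) :
    Tendsto (fun p : ℝ × ℝ ↦ (X p.1 p.2, Y p.1 p.2, T p.1 p.2)) (𝓝 R ×ˢ 𝓝 t)
      (𝓝 (X R t, Y R t, T R t)) := by
  rw [← nhds_prod_eq]
  exact hF.continuous.tendsto (R, t)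

theorem eventually_mem (hF : ShootingFamily lam X Y T) {O : Set (ℝ × ℝ × ℝ)} (hO : IsOpen O)
    (h : (X R₀ τ, Y R₀ τ, T R₀ τ) ∈ O) : ∀ᶠ R in 𝓝 R₀, (X R τ, Y R τ, T R τ) ∈ O :=
  (hF.continuous.comp (by fun_prop : Continuous fun R : ℝ ↦ (R, τ))).continuousAt.eventually_mem
    (hO.mem_nhds h)

theorem exists_eventually_forall_leftwardAbove (hF : ShootingFamily lam X Y T) (hR₀ : 0 < R₀)
    (hR : 2 * lam < R₀ ^ 2) :
    ∃ ε > 0, ∀ᶠ R in 𝓝 R₀, ∀ t ∈ Ioc 0 ε, LeftwardAbove (Y R) (T R) t := by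
  have hshot := hF.shot R₀ hR₀
  have hlim := hF.tendsto R₀ 0
  rw [hshot.x_zero, hshot.y_zero, hshot.θ_zero] at hlim
  obtain ⟨s, hs, u, hu, hsu⟩ :=
    eventually_prod_iff.1 (hlim.eventually (eventually_curvature_pos hR₀ hR))
  obtain ⟨ε, hε, hεu⟩ := mem_nhdsGE_iff_exists_Icc_subset.1 (nhdsWithin_le_nhds hu)
  refine ⟨ε, hε, ?_⟩
  filter_upwards [hs, lt_mem_nhds hR₀] with R hRs hR t ht
  exact (hF.shot R hR).leftwardAbove_of_curvature_pos ht.1 fun v hv ↦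
    hsu hRs (hεu ⟨hv.1, hv.2.trans ht.2⟩)

theorem eventually_forall_mem (hF : ShootingFamily lam X Y T) (hR₀ : 0 < R₀)
    (hR : 2 * lam < R₀ ^ 2) {O : Set (ℝ × ℝ × ℝ)} (hO : IsOpen O)
    (hΩ : ∀ p : ℝ × ℝ × ℝ, 0 < p.2.1 → p.2.2 ∈ Ioo (π / 2) (3 * π / 2) → p ∈ O)
    (h : ∀ t ∈ Ioc 0 τ, (X R₀ t, Y R₀ t, T R₀ t) ∈ O) :
    ∀ᶠ R in 𝓝 R₀, ∀ t ∈ Ioc 0 τ, (X R t, Y R t, T R t) ∈ O := by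
  obtain ⟨ε, hε, hstart⟩ := hF.exists_eventually_forall_leftwardAbove hR₀ hR
  have hcompact : ∀ᶠ R in 𝓝 R₀, ∀ t ∈ Icc ε τ, (X R t, Y R t, T R t) ∈ O := by
    refine isCompact_Icc.eventually_forall_of_forall_eventually fun t ht ↦ ?_
    exact (hF.continuous.tendsto (R₀, t)).eventually_mem
      (hO.mem_nhds (h t ⟨hε.trans_le ht.1, ht.2⟩))
  filter_upwards [hstart, hcompact] with R hRs hRc t ht
  rcases le_total t ε with htε | htε
  · exact hΩ _ (hRs t ⟨ht.1, htε⟩).1 (hRs t ⟨ht.1, htε⟩).2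
  · exact hRc t ⟨htε, ht.2⟩

theorem eventually_crossesAxis (hF : ShootingFamily lam X Y T) (hR₀ : 0 < R₀)
    (hR : 2 * lam < R₀ ^ 2) (h : CrossesAxis (Y R₀) (T R₀)) :
    ∀ᶠ R in 𝓝 R₀, CrossesAxis (Y R) (T R) := by
  obtain ⟨τ, hτ, hy, hθ⟩ := h
  have hθO : IsOpen {p : ℝ × ℝ × ℝ | p.2.2 ∈ Ioo (π / 2) (3 * π / 2)} :=
    isOpen_Ioo.preimage (by fun_prop)
  have hyO : IsOpen {p : ℝ × ℝ × ℝ | p.2.1 < 0} := isOpen_lt (by fun_prop) continuous_const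
  filter_upwards [hF.eventually_forall_mem hR₀ hR hθO (fun _ _ hp ↦ hp) hθ,
    hF.eventually_mem hyO hy] with R hRθ hRy
  exact ⟨τ, hτ, hRy, hRθ⟩

theorem eventually_obstructed (hF : ShootingFamily lam X Y T) (hR₀ : 0 < R₀)
    (hR : 2 * lam < R₀ ^ 2) (h : Obstructed lam (X R₀) (Y R₀) (T R₀)) :
    ∀ᶠ R in 𝓝 R₀, Obstructed lam (X R) (Y R) (T R) := by
  obtain ⟨τ, hτ, hy, hend⟩ := h
  have hyO : IsOpen {p : ℝ × ℝ × ℝ | 0 < p.2.1} := isOpen_lt continuous_const (by fun_prop)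
  have hstrip : IsOpen {p : ℝ × ℝ × ℝ | p.2.2 ∉ Icc (π / 2) (3 * π / 2)} :=
    isClosed_Icc.isOpen_compl.preimage (by fun_prop)
  have hsin : IsOpen {p : ℝ × ℝ × ℝ | 0 < sin p.2.2} := isOpen_lt continuous_const (by fun_prop)
  have hx : IsOpen {p : ℝ × ℝ × ℝ | p.1 ^ 2 < lam} := isOpen_lt (by fun_prop) continuous_const
  have hxy : IsOpen {p : ℝ × ℝ × ℝ | π * p.1 < lam * p.2.1} :=
    isOpen_lt (by fun_prop) (by fun_prop)
  filter_upwards [hF.eventually_forall_mem hR₀ hR hyO (fun _ hp _ ↦ hp) hy,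
    hF.eventually_mem (hstrip.union (hsin.inter (hx.inter hxy))) hend] with R hRy hRend
  exact ⟨τ, hτ, hRy, hRend⟩

theorem exists_meetsAxisOrthogonally (hF : ShootingFamily lam X Y T) (hlam : 0 < lam) {R₁ : ℝ}
    (hR₁ : √(2 * (lam + 1)) ≤ R₁) (hcross : CrossesAxis (Y R₁) (T R₁)) :
    ∃ R > 0, MeetsAxisOrthogonally (Y R) (T R) := by
  by_contra! hno
  set ρ := √(2 * (lam + 1))
  have hρ : 0 < ρ := by positivity
  have hρ2 : ρ ^ 2 = 2 * (lam + 1) := sq_sqrt (by positivity)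
  have hlarge : ∀ R ∈ Icc ρ R₁, 0 < R ∧ 2 * lam < R ^ 2 := fun R hR ↦
    ⟨hρ.trans_le hR.1, by nlinarith [hR.1]⟩
  have hlargeO (R : ℝ) (hR : 0 < R ∧ 2 * lam < R ^ 2) :
      ∀ᶠ r in 𝓝 R, 0 < r ∧ 2 * lam < r ^ 2 :=
    (lt_mem_nhds hR.1).and ((continuous_pow 2).continuousAt.eventually_const_lt hR.2)
  have hcover (R : ℝ) (hR : 0 < R ∧ 2 * lam < R ^ 2) :
      CrossesAxis (Y R) (T R) ∨ Obstructed lam (X R) (Y R) (T R) :=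
    ((hF.shot R hR.1).crossesAxis_or_meetsAxisOrthogonally_or_obstructed hlam hR.2).imp_right
      fun h ↦ h.resolve_left (hno R hR.1)
  obtain ⟨R, -, ⟨hR, hRcross⟩, -, hRobs⟩ := isPreconnected_Icc (a := ρ) (b := R₁)
    {R | (0 < R ∧ 2 * lam < R ^ 2) ∧ CrossesAxis (Y R) (T R)}
    {R | (0 < R ∧ 2 * lam < R ^ 2) ∧ Obstructed lam (X R) (Y R) (T R)}
    (isOpen_iff_mem_nhds.2 fun R hR ↦
      (hlargeO R hR.1).and (hF.eventually_crossesAxis hR.1.1 hR.1.2 hR.2))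
    (isOpen_iff_mem_nhds.2 fun R hR ↦
      (hlargeO R hR.1).and (hF.eventually_obstructed hR.1.1 hR.1.2 hR.2))
    (fun R hR ↦ (hcover R (hlarge R hR)).imp (⟨hlarge R hR, ·⟩) (⟨hlarge R hR, ·⟩))
    ⟨R₁, ⟨hR₁, le_rfl⟩, hlarge R₁ ⟨hR₁, le_rfl⟩, hcross⟩
    ⟨ρ, ⟨le_rfl, hR₁⟩, hlarge ρ ⟨le_rfl, hR₁⟩, (hcover ρ (hlarge ρ ⟨le_rfl, hR₁⟩)).resolve_left
      ((hF.shot ρ hρ).not_crossesAxis_of_sq_eq hρ2)⟩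
  exact (hF.shot R hR.1).not_crossesAxis_of_obstructed hlam hRobs hRcross

end ShootingFamily

end ShootingFamily

section Ascent

variable {lam R : ℝ}

theorem mul_sin_le_curvature (hlam : 0 < lam) (hR : 4 * lam ≤ R) (hR₂ : 4 ≤ R) {x y θ : ℝ}
    (hx : R / 2 ≤ x) (hy : 0 ≤ y) (hsin : 0 ≤ sin θ) (hcos : cos θ ≤ 0) :
    R / 8 * sin θ ≤ curvature lam x y θ := by
  have hdiv : lam / x ≤ R / 8 := by
    rw [div_le_iff₀ (by linarith)]
    nlinarith
  have hcoef : R / 8 ≤ x / 2 - lam / x := by linarith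
  calc R / 8 * sin θ ≤ (x / 2 - lam / x) * sin θ := by gcongr
    _ ≤ curvature lam x y θ := by
      simp only [curvature]
      linarith [mul_nonpos_of_nonneg_of_nonpos hy hcos]

theorem curvature_le (hlam : 0 < lam) {x y θ : ℝ} (hx : 0 < x) (hy : 0 ≤ y) (hsin : 0 ≤ sin θ) :
    curvature lam x y θ ≤ (x + y) / 2 := by
  have hcoef : (x / 2 - lam / x) * sin θ ≤ x / 2 := by
    have := mul_nonneg (div_pos hlam hx).le hsin
    nlinarith [sin_le_one θ]
  simp only [curvature]
  nlinarith [neg_one_le_cos θ]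

theorem mul_weight_lt_weight (hlam : 0 < lam) (hR : 100 + 100 * lam ≤ R) {x y : ℝ}
    (hx : x ∈ Icc (R / 2) (R / 2 + 1)) (hy : y ^ 2 ≤ 1) :
    4 * R * weight lam R 0 < weight lam x y := by
  have hlog : lam * (log R - log 2) ≤ lam * log x := by
    rw [← log_div (by linarith) (by norm_num)]
    have := log_le_log (by linarith) hx.1
    gcongr
  have hx2 : x ^ 2 ≤ (R / 2 + 1) ^ 2 := pow_le_pow_left₀ (by linarith [hx.1]) hx.2 2
  calc 4 * R * weight lam R 0 ≤ exp (4 * R) * weight lam R 0 := by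
        have := weight_pos lam R 0
        gcongr
        linarith [add_one_le_exp (4 * R)]
    _ < weight lam x y := by
        rw [weight, weight, ← exp_add, exp_lt_exp]
        nlinarith [log_two_lt_d9]

/-- Up to time `t` the curve moves up and towards the axis of rotation. -/
def RisesUntil (y θ : ℝ → ℝ) (t : ℝ) : Prop :=
  ∀ s ∈ Ioo 0 t, LeftwardAbove y θ s ∧ 0 ≤ sin (θ s)

variable {x y θ : ℝ → ℝ} {s t : ℝ}

theorem RisesUntil.mono (hr : RisesUntil y θ t) (hst : s ≤ t) : RisesUntil y θ s :=
  fun u hu ↦ hr u ⟨hu.1, hu.2.trans_le hst⟩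

theorem RisesUntil.θ_mem (hr : RisesUntil y θ t) (hθ : Continuous θ) (ht : 0 < t) :
    θ t ∈ Icc (π / 2) π := by
  have hsub : closure (Ioo 0 t) ⊆ θ ⁻¹' Icc (π / 2) π :=
    closure_minimal (fun s hs ↦ ⟨(hr s hs).1.2.1.le,
      (sin_nonneg_iff_le_pi (Ioo_subset_Icc_self (hr s hs).1.2)).1 (hr s hs).2⟩)
      (isClosed_Icc.preimage hθ)
  rw [closure_Ioo ht.ne] at hsub
  exact hsub (right_mem_Icc.2 ht.le)

namespace DirectedGeodesic

theorem add_mul_x_sub_le (h : DirectedGeodesic lam x y θ) {f f' : ℝ → ℝ}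
    (hf : ∀ t, HasDerivAt f (f' t) t) {c : ℝ} (hc : 0 ≤ c) (hst : s ≤ t)
    (hf' : ∀ u ∈ Ioo s t, f' u ≤ -(speed (x u) (y u) * c)) : f t + c * (x s - x t) ≤ f s := by
  have hanti := le_of_hasDerivAt_nonpos_Ioo
    (fun u ↦ (hf u).sub ((h.hasDerivAt_x u).const_mul c)) hst fun u hu ↦ by
      nlinarith [hf' u hu, mul_nonneg (mul_nonneg (h.speed_pos u).le hc)
        (by linarith [neg_one_le_cos (θ u)] : 0 ≤ 1 + cos (θ u))]
  simp only [Pi.sub_apply] at hanti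
  linarith

end DirectedGeodesic

namespace OrthogonalShot

variable (h : OrthogonalShot lam R x y θ)
include h

theorem x_le (hr : RisesUntil y θ t) (ht : 0 ≤ t) : x t ≤ R :=
  h.x_zero ▸ h.x_le_of_leftward ht fun u hu ↦ (hr u hu).1.2

theorem weight_mul_sin_lt_weight (hr : RisesUntil y θ t) (ht : 0 < t) :
    weight lam (x t) (y t) * sin (θ t) < weight lam R 0 := by
  simpa only [h.x_zero, h.y_zero, h.θ_zero, sin_pi_div_two, mul_one] using
    h.weight_mul_sin_lt ht fun u hu ↦ (hr u hu).1.1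

theorem mul_sin_le_curvature (hlam : 0 < lam) (hR : 100 + 100 * lam ≤ R) (hr : RisesUntil y θ t)
    (hx : R / 2 ≤ x t) (hs : s ∈ Ioo 0 t) :
    R / 8 * sin (θ s) ≤ curvature lam (x s) (y s) (θ s) := by
  have hxs : x t ≤ x s := h.x_le_of_leftward hs.2.le fun u hu ↦ (hr u ⟨hs.1.trans hu.1, hu.2⟩).1.2
  exact Angenent.mul_sin_le_curvature hlam (by linarith) (by linarith) (hx.trans hxs)
    (hr s hs).1.1.le (hr s hs).2 (cos_neg_of_mem_Ioo (hr s hs).1.2).le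

theorem y_le (hlam : 0 < lam) (hR : 100 + 100 * lam ≤ R) (hr : RisesUntil y θ t) (ht : 0 < t)
    (hx : R / 2 ≤ x t) : y t ≤ 4 * π / R := by
  have hR₀ : 0 < R := by linarith
  have hanti := le_of_hasDerivAt_nonpos_Ioo
    (fun u ↦ (h.hasDerivAt_y u).sub ((h.hasDerivAt_θ u).const_mul (8 / R))) ht.le fun u hu ↦ by
      have hsin : sin (θ u) ≤ 8 / R * curvature lam (x u) (y u) (θ u) := by
        calc sin (θ u) = 8 / R * (R / 8 * sin (θ u)) := by field_simp
          _ ≤ _ := by gcongr; exact h.mul_sin_le_curvature hlam hR hr hx hu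
      nlinarith [h.speed_pos u]
  simp only [Pi.sub_apply, h.y_zero, h.θ_zero] at hanti
  have hθ : 8 / R * θ t ≤ 8 / R * π := by
    gcongr
    exact (hr.θ_mem h.continuous_θ ht).2
  have hπ : 4 * π / R = 8 / R * π - 8 / R * (π / 2) := by ring
  linarith

theorem y_le_one (hlam : 0 < lam) (hR : 100 + 100 * lam ≤ R) (hr : RisesUntil y θ t) (ht : 0 < t)
    (hx : R / 2 ≤ x t) : y t ≤ 1 := by
  refine (h.y_le hlam hR hr ht hx).trans ((div_le_one (by linarith)).2 ?_)
  linarith [pi_lt_four]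

theorem neg_cos_le_mul_y (hlam : 0 < lam) (hR : 100 + 100 * lam ≤ R) (hr : RisesUntil y θ t)
    (ht : 0 < t) (hx : R / 2 ≤ x t) : -cos (θ t) ≤ R * y t := by
  have hmono := le_of_hasDerivAt_nonneg_Ioo
    (fun u ↦ ((h.hasDerivAt_y u).const_mul R).add (h.hasDerivAt_cos u)) ht.le fun u hu ↦ by
      have hru := hr.mono hu.2.le
      have hxu : x t ≤ x u := h.x_le_of_leftward hu.2.le fun v hv ↦
        (hr v ⟨hu.1.trans hv.1, hv.2⟩).1.2
      have hK := curvature_le hlam (h.pos u) (hr u hu).1.1.le (hr u hu).2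
      have hyu := h.y_le_one hlam hR hru hu.1 (hx.trans hxu)
      have hKR : curvature lam (x u) (y u) (θ u) ≤ R := by linarith [h.x_le hru hu.1.le]
      nlinarith [mul_nonneg (h.speed_pos u).le (hr u hu).2]
  simp only [Pi.add_apply, h.y_zero, h.θ_zero, cos_pi_div_two] at hmono
  linarith

theorem one_div_le_y (hlam : 0 < lam) (hR : 100 + 100 * lam ≤ R) (hr : RisesUntil y θ t)
    (ht : 0 < t) (hx : x t = R / 2 + 1) (hsin : 0 ≤ sin (θ t)) : 1 / (2 * R) ≤ y t := by
  have hR₀ : 0 < R := by linarith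
  have hx' : R / 2 ≤ x t := by linarith
  have hy₀ : 0 ≤ y t := h.y_zero ▸ h.y_le_of_sin_nonneg ht.le fun u hu ↦ (hr u hu).2
  have hy₁ := h.y_le_one hlam hR hr ht hx'
  have hw := mul_weight_lt_weight hlam hR (x := x t) (y := y t) ⟨hx', hx.le⟩ (by nlinarith)
  have hsin' : sin (θ t) ≤ 1 / 2 := by
    have hmom := h.weight_mul_sin_lt_weight hr ht
    by_contra! hlt
    nlinarith [weight_pos lam R 0, weight_pos lam (x t) (y t)]
  have hcos : cos (θ t) ≤ 0 := cos_nonpos_of_pi_div_two_le_of_le (hr.θ_mem h.continuous_θ ht).1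
    (by linarith [(hr.θ_mem h.continuous_θ ht).2, pi_pos])
  have hcos' : 1 / 2 ≤ -cos (θ t) := by nlinarith [sin_sq_add_cos_sq (θ t)]
  rw [div_le_iff₀ (by positivity)]
  linarith [h.neg_cos_le_mul_y hlam hR hr ht hx']

theorem x_ne_half (hlam : 0 < lam) (hR : 100 + 100 * lam ≤ R) (hr : RisesUntil y θ t)
    (ht : 0 < t) : x t ≠ R / 2 := by
  intro hxt
  have hR₀ : 0 < R := by linarith
  obtain ⟨s, hs, hxs⟩ := intermediate_value_Ioo' ht.le h.continuous_x.continuousOn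
    (by constructor <;> linarith [h.x_zero] : R / 2 + 1 ∈ Ioo (x t) (x 0))
  have hrs := hr.mono hs.2.le
  have hys := h.one_div_le_y hlam hR hrs hs.1 hxs (hr s hs).2
  have hdrop := h.add_mul_x_sub_le h.hasDerivAt_weight_mul_sin (c := weight lam R 0)
    (weight_pos _ _ _).le hs.2.le fun u hu ↦ by
      have hu₀ := hs.1.trans hu.1
      have hxu : x u ∈ Icc (R / 2) (R / 2 + 1) :=
        ⟨hxt ▸ h.x_le_of_leftward hu.2.le fun v hv ↦ (hr v ⟨hu₀.trans hv.1, hv.2⟩).1.2,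
          hxs ▸ h.x_le_of_leftward hu.1.le fun v hv ↦
            (hr v ⟨hs.1.trans hv.1, hv.2.trans hu.2⟩).1.2⟩
      have hyu₀ := (hr u ⟨hu₀, hu.2⟩).1.1
      have hyu₁ := h.y_le_one hlam hR (hr.mono hu.2.le) hu₀ hxu.1
      have hyu : 1 / (2 * R) ≤ y u := hys.trans <| h.y_le_of_sin_nonneg hu.1.le fun v hv ↦
        (hr v ⟨hs.1.trans hv.1, hv.2.trans hu.2⟩).2
      have hw := (mul_weight_lt_weight hlam hR (y := y u) hxu (by nlinarith)).le
      have hprod : weight lam R 0 ≤ y u / 2 * weight lam (x u) (y u) := by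
        calc weight lam R 0 = 1 / (2 * R) / 2 * (4 * R * weight lam R 0) := by field_simp; norm_num
          _ ≤ _ := by have := (weight_pos lam R 0).le; gcongr ?_ * ?_; linarith
      nlinarith [h.speed_pos u]
  have hθt := hr.θ_mem h.continuous_θ ht
  have hsin : 0 ≤ sin (θ t) := sin_nonneg_of_nonneg_of_le_pi (by linarith [hθt.1, pi_pos]) hθt.2
  rw [hxs, hxt] at hdrop
  have hmom := hxs ▸ h.weight_mul_sin_lt_weight hrs hs.1
  nlinarith [weight_pos lam (R / 2) (y t)]

theorem half_le_x (hlam : 0 < lam) (hR : 100 + 100 * lam ≤ R) (hr : RisesUntil y θ t)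
    (ht : 0 < t) : R / 2 ≤ x t := by
  by_contra! hlt
  obtain ⟨s, hs, hxs⟩ := intermediate_value_Ioo' ht.le h.continuous_x.continuousOn
    (⟨hlt, by linarith [h.x_zero]⟩ : R / 2 ∈ Ioo (x t) (x 0))
  exact h.x_ne_half hlam hR (hr.mono hs.2.le) hs.1 hxs

theorem exists_leavesAt (hlam : 0 < lam) (hR : 100 + 100 * lam ≤ R) : ∃ t, LeavesAt y θ t := by
  refine (forall_leftwardAbove_or_exists_leavesAt h.continuous_y h.continuous_θ
    (h.eventually_leftwardAbove (by nlinarith))).resolve_left fun hΩ ↦ ?_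
  obtain ⟨t, ht, hxt⟩ := h.exists_x_lt_of_forall_leftwardAbove hlam hΩ
    (by linarith : 0 < R / 2)
  exact hxt.not_ge <| h.half_le_x hlam hR (fun s hs ↦
    ⟨hΩ s hs.1, (h.sin_pos_of_forall_leftwardAbove hlam hΩ hs.1).le⟩) ht

theorem not_risesUntil (hlam : 0 < lam) (hR : 100 + 100 * lam ≤ R) (hl : LeavesAt y θ t) :
    ¬ RisesUntil y θ t := by
  intro hr
  have hx := h.half_le_x hlam hR hr hl.pos
  obtain ⟨s, hs⟩ := exists_between hl.pos
  have hy : y s ≤ y t := h.y_le_of_sin_nonneg hs.2.le fun u hu ↦ (hr u ⟨hs.1.trans hu.1, hu.2⟩).2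
  have hθ : θ s ≤ θ t := le_of_hasDerivAt_nonneg_Ioo h.hasDerivAt_θ hs.2.le fun u hu ↦ by
    have hu' : u ∈ Ioo 0 t := ⟨hs.1.trans hu.1, hu.2⟩
    have hK := h.mul_sin_le_curvature hlam hR hr hx hu'
    exact mul_nonneg (h.speed_pos u).le
      ((mul_nonneg (by linarith) (hr u hu').2).trans hK)
  have hs' := hl.leftwardAbove s hs
  exact hl.not_leftwardAbove ⟨hs'.1.trans_le hy, hs'.2.1.trans_le hθ,
    (hr.θ_mem h.continuous_θ hl.pos).2.trans_lt (by linarith [pi_pos])⟩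

theorem exists_top (hlam : 0 < lam) (hR : 100 + 100 * lam ≤ R) (hl : LeavesAt y θ t) :
    ∃ s ∈ Ioo 0 t, θ s = π ∧ R / 2 ≤ x s ∧ y s ≤ 4 * π / R := by
  obtain ⟨u, hu, hsin⟩ : ∃ u ∈ Ioo 0 t, sin (θ u) < 0 := by
    have := h.not_risesUntil hlam hR hl
    by_contra! hsin
    exact this fun u hu ↦ ⟨hl.leftwardAbove u hu, hsin u hu⟩
  have hθu : π < θ u := not_le.1 fun hle ↦ hsin.not_ge <|
    (sin_nonneg_iff_le_pi (Ioo_subset_Icc_self (hl.leftwardAbove u hu).2)).2 hle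
  obtain ⟨s, hs, hθs⟩ := intermediate_value_Ioo hu.1.le h.continuous_θ.continuousOn
    (⟨by linarith [h.θ_zero, pi_pos], hθu⟩ : π ∈ Ioo (θ 0) (θ u))
  have hst := hs.2.trans hu.2
  have hr : RisesUntil y θ s := fun v hv ↦
    ⟨hl.leftwardAbove v ⟨hv.1, hv.2.trans hst⟩, (h.sin_pos_of_sin_nonneg hv.2 (fun w hw ↦
      (hl.leftwardAbove w ⟨hv.1.trans hw.1, hw.2.trans hst⟩).1) (by rw [hθs, sin_pi])).le⟩
  have hx := h.half_le_x hlam hR hr hs.1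
  exact ⟨s, ⟨hs.1, hst⟩, hθs, hx, h.y_le hlam hR hr hs.1 hx⟩

end OrthogonalShot

end Ascent

section Descent

variable {lam : ℝ}

theorem weight_le_weight_zero (lam x y : ℝ) : weight lam x y ≤ weight lam x 0 :=
  exp_le_exp.2 (by nlinarith [sq_nonneg y])

theorem weight_le_rpow {x : ℝ} (hx : 0 < x) (y : ℝ) : weight lam x y ≤ x ^ lam := by
  rw [weight, rpow_def_of_pos hx, exp_le_exp]
  nlinarith [sq_nonneg x, sq_nonneg y]

theorem exp_neg_le_weight (hlam : 0 < lam) {x y c : ℝ} (hx : 1 ≤ x) (hxy : x ^ 2 + y ^ 2 ≤ 4 * c) :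
    exp (-c) ≤ weight lam x y :=
  exp_le_exp.2 (by linarith [mul_nonneg hlam.le (log_nonneg hx)])

theorem weight_mul_one_add_sq_le (hlam : 0 < lam) {x : ℝ} (hx : 0 < x) :
    weight lam x 0 * (1 + x) ^ 2 ≤ exp ((lam + 2) ^ 2) := by
  have hsq : (1 + x) ^ 2 ≤ exp (2 * x) := by
    rw [two_mul, exp_add]
    nlinarith [add_one_le_exp x]
  calc weight lam x 0 * (1 + x) ^ 2 ≤ weight lam x 0 * exp (2 * x) := by
        have := (weight_pos lam x 0).le
        gcongr
    _ ≤ exp ((lam + 2) ^ 2) := by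
      rw [weight, ← exp_add, exp_le_exp]
      nlinarith [log_le_sub_one_of_pos hx, sq_nonneg (x / 2 - (lam + 2))]

theorem exp_neg_div_le_weight (hlam : 0 < lam) {x V : ℝ} (hx : 0 < x) (hV : 1 ≤ V)
    (hxV : x ^ (-(lam + 1)) ≤ V) (hx2 : x ^ 2 ≤ 2 * lam) :
    exp (-(lam / 2)) / V ≤ weight lam x 0 := by
  rcases le_or_gt 1 x with h1 | h1
  · exact (div_le_self (exp_pos _).le hV).trans (exp_neg_le_weight hlam h1 (by linarith))
  have hinv : 1 / V ≤ x ^ lam := by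
    rw [rpow_neg hx.le] at hxV
    calc 1 / V ≤ x ^ (lam + 1) := by
          rw [one_div]
          exact inv_le_of_inv_le₀ (rpow_pos_of_pos hx _) hxV
      _ ≤ x ^ lam := rpow_le_rpow_of_exponent_ge hx h1.le (by linarith)
  calc exp (-(lam / 2)) / V = exp (-(lam / 2)) * (1 / V) := by ring
    _ ≤ exp (-(x ^ 2 + 0 ^ 2) / 4) * x ^ lam := by
      gcongr
      linarith
    _ = weight lam x 0 := by
      rw [weight, rpow_def_of_pos hx, ← exp_add]
      ring_nf

variable {x y θ : ℝ → ℝ} {s t u v : ℝ}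

namespace DirectedGeodesic

theorem hasDerivAt_weight_zero_mul_sin (h : DirectedGeodesic lam x y θ) (t : ℝ) :
    HasDerivAt (fun s ↦ weight lam (x s) 0 * sin (θ s))
      (-(speed (x t) (y t) * (y t / 2) * weight lam (x t) 0 * cos (θ t) ^ 2)) t := by
  have hweight : HasDerivAt (fun s ↦ weight lam (x s) 0) (weight lam (x t) 0 *
      ((lam / x t - x t / 2) * (speed (x t) (y t) * cos (θ t)))) t := by
    have hx := (h.pos t).ne'
    refine ((((h.hasDerivAt_x t).log hx).const_mul lam).sub
      ((((h.hasDerivAt_x t).pow 2).add_const (0 ^ 2)).div_const 4)).exp.congr_deriv ?_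
    change weight lam (x t) 0 * _ = _
    congr 1
    push_cast
    field_simp
    ring
  refine (hweight.mul (h.hasDerivAt_sin t)).congr_deriv ?_
  simp only [curvature]
  ring

theorem angularMomentum_add_le (h : DirectedGeodesic lam x y θ) (hlam : 0 < lam) {q : ℝ}
    (hq : 0 ≤ q) (hst : s ≤ t) (hle : ∀ u ∈ Ioo s t, q ≤ y u / x u * weight lam (x u) (y u)) :
    angularMomentum lam (x t) (y t) (θ t) + lam * q * (x s - x t) ≤
      angularMomentum lam (x s) (y s) (θ s) :=
  h.add_mul_x_sub_le h.hasDerivAt_angularMomentum (by positivity) hst fun u hu ↦ by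
    nlinarith [mul_le_mul_of_nonneg_left (hle u hu) (mul_pos hlam (h.speed_pos u)).le]

theorem slope_add_rpow_le (h : DirectedGeodesic lam x y θ) (hlam : 0 < lam) {w : ℝ} (hw : 0 ≤ w)
    (hst : s ≤ t) (hJ : ∀ u ∈ Ioo s t, angularMomentum lam (x u) (y u) (θ u) ≤ -w) :
    y t / x t + w / (lam + 1) * x t ^ (-(lam + 1)) ≤
      y s / x s + w / (lam + 1) * x s ^ (-(lam + 1)) := by
  refine le_of_hasDerivAt_nonpos_Ioo (fun u ↦ (h.hasDerivAt_slope u).add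
    (((h.hasDerivAt_x u).rpow_const (Or.inl (h.pos u).ne')).const_mul (w / (lam + 1)))) hst
    fun u hu ↦ ?_
  have hx := h.pos u
  have hpow : x u ^ (-(lam + 1) - 1) = x u ^ (-lam) / x u ^ 2 := by
    rw [← rpow_natCast, ← rpow_sub hx]
    congr 1
    push_cast
    ring
  have hmom : x u * sin (θ u) - y u * cos (θ u) ≤ -(w * x u ^ (-lam)) := by
    have hone : weight lam (x u) (y u) * x u ^ (-lam) ≤ 1 := by
      rw [rpow_neg hx.le, ← div_eq_mul_inv, div_le_one (by positivity)]
      exact weight_le_rpow hx _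
    refine le_of_mul_le_mul_left ((hJ u hu).trans ?_) (weight_pos lam (x u) (y u))
    nlinarith
  have hcos : w * x u ^ (-lam) * -cos (θ u) ≤ w * x u ^ (-lam) :=
    mul_le_of_le_one_right (by positivity) (by linarith [neg_one_le_cos (θ u)])
  calc _ = speed (x u) (y u) / x u ^ 2 *
        ((x u * sin (θ u) - y u * cos (θ u)) + w * x u ^ (-lam) * -cos (θ u)) := by
        rw [hpow]
        field_simp
    _ ≤ 0 := mul_nonpos_of_nonneg_of_nonpos
        (div_nonneg (h.speed_pos u).le (sq_nonneg _)) (by linarith)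

end DirectedGeodesic

namespace LeavesAt

theorem θ_eq_of_not_crossesAxis (h : LeavesAt y θ t) (hg : DirectedGeodesic lam x y θ)
    (hsin : sin (θ t) < 0) (hno : ¬ CrossesAxis y θ) : θ t = 3 * π / 2 := by
  by_contra hne
  obtain ⟨hy, hθ⟩ := h.y_nonneg_and_θ_mem hg.continuous_y hg.continuous_θ
  have hθ' : π / 2 < θ t := by
    by_contra! hle
    rw [le_antisymm hle hθ.1, sin_pi_div_two] at hsin
    linarith
  refine hno (h.crossesAxis hg (hy.eq_or_lt.resolve_right fun hpos ↦ ?_).symm hne)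
  exact h.not_leftwardAbove ⟨hpos, hθ', hθ.2.lt_of_ne hne⟩

theorem x_sq_le (h : LeavesAt y θ t) (hg : DirectedGeodesic lam x y θ) (hθ : θ t = 3 * π / 2) :
    x t ^ 2 ≤ 2 * lam := by
  have hderiv : 0 ≤ speed (x t) (y t) * curvature lam (x t) (y t) (θ t) :=
    nonneg_of_hasDerivAt_of_eventually_le (hg.hasDerivAt_θ t) <| by
      filter_upwards [Ioo_mem_nhdsLT h.pos] with s hs
      exact hθ ▸ (h.leftwardAbove s hs).2.2.le
  have hK := nonneg_of_mul_nonneg_right hderiv (hg.speed_pos t)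
  rw [curvature, hθ, cos_three_pi_div_two, sin_three_pi_div_two] at hK
  have hdiv : x t / 2 ≤ lam / x t := by linarith
  rw [le_div_iff₀ (hg.pos t)] at hdiv
  linarith

end LeavesAt

/-- The curve moves leftward above the axis of reflection between the times `s` and `t`, and is
parallel to that axis at time `s`. -/
structure Descends (y θ : ℝ → ℝ) (s t : ℝ) : Prop where
  lt : s < t
  θ_eq : θ s = π
  leftwardAbove : ∀ u ∈ Ico s t, LeftwardAbove y θ u

namespace Descends

variable (hd : Descends y θ s t)
include hd

theorem mono (hsu : s < u) (hut : u ≤ t) : Descends y θ s u :=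
  ⟨hsu, hd.θ_eq, fun v hv ↦ hd.leftwardAbove v ⟨hv.1, hv.2.trans_le hut⟩⟩

theorem y_pos : 0 < y s := (hd.leftwardAbove s ⟨le_rfl, hd.lt⟩).1

variable (h : DirectedGeodesic lam x y θ)
include h

theorem sin_neg (hu : u ∈ Ioc s t) : sin (θ u) < 0 :=
  h.sin_neg_of_sin_nonpos hu.1 (fun v hv ↦ (hd.leftwardAbove v ⟨hv.1.le, hv.2.trans_le hu.2⟩).1)
    (by rw [hd.θ_eq, sin_pi])

theorem x_le (hsu : s ≤ u) (huv : u ≤ v) (hvt : v ≤ t) : x v ≤ x u :=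
  h.x_le_of_leftward huv fun w hw ↦
    (hd.leftwardAbove w ⟨hsu.trans hw.1.le, hw.2.trans_le hvt⟩).2

theorem y_le (hsu : s ≤ u) (huv : u ≤ v) (hvt : v ≤ t) : y v ≤ y u :=
  h.y_le_of_sin_nonpos huv fun _ hw ↦
    (hd.sin_neg h ⟨hsu.trans_lt hw.1, hw.2.le.trans hvt⟩).le

theorem angularMomentum_le (hlam : 0 < lam) (hsu : s ≤ u) (huv : u ≤ v) (hvt : v ≤ t) :
    angularMomentum lam (x v) (y v) (θ v) ≤ angularMomentum lam (x u) (y u) (θ u) := by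
  simpa only [mul_zero, zero_mul, add_zero] using
    h.angularMomentum_add_le hlam le_rfl huv fun w hw ↦
      mul_nonneg (div_nonneg (hd.leftwardAbove w ⟨hsu.trans hw.1.le, hw.2.trans_le hvt⟩).1.le
        (h.pos w).le) (weight_pos _ _ _).le

theorem exp_neg_le_weight (hlam : 0 < lam) (hys : y s ≤ 1) (hu : u ∈ Ico s t)
    (hxu : x u ∈ Icc 1 3) : exp (-(5 / 2)) ≤ weight lam (x u) (y u) := by
  have hyu := (hd.y_le h le_rfl hu.1 hu.2.le).trans hys
  have hyu₀ := (hd.leftwardAbove u hu).1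
  exact Angenent.exp_neg_le_weight hlam hxu.1 (by nlinarith [hxu.1, hxu.2])

theorem weight_zero_le (hlam : 0 < lam) (hθt : θ t = 3 * π / 2) :
    weight lam (x t) 0 ≤ y s / 2 * exp ((lam + 2) ^ 2) := by
  set K := exp ((lam + 2) ^ 2)
  have hK : 0 < K := exp_pos _
  have hmono := le_of_hasDerivAt_nonneg_Ioo
    (fun u ↦ (h.hasDerivAt_weight_zero_mul_sin u).add
      ((((h.hasDerivAt_x u).const_add 1).fun_inv (by linarith [h.pos u])).const_mul (y s / 2 * K)))
    hd.lt.le fun u hu ↦ by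
      have hx := h.pos u
      have hu' := hd.leftwardAbove u (Ioo_subset_Ico_self hu)
      have hcos := cos_neg_of_mem_Ioo hu'.2
      have hbound : weight lam (x u) 0 * y u * -cos (θ u) ≤ K / (1 + x u) ^ 2 * y s * 1 := by
        gcongr
        · linarith
        · exact mul_nonneg (by positivity) hd.y_pos.le
        · exact hu'.1.le
        · exact (le_div_iff₀ (by positivity)).2 (weight_mul_one_add_sq_le hlam hx)
        · exact hd.y_le h le_rfl hu.1.le hu.2.le
        · linarith [neg_one_le_cos (θ u)]
      have := mul_nonneg (mul_nonneg (h.speed_pos u).le (neg_nonneg.2 hcos.le))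
        (sub_nonneg.2 hbound)
      linear_combination this / 2
  simp only [Pi.add_apply, hθt, hd.θ_eq, sin_three_pi_div_two, sin_pi] at hmono
  have hys := hd.y_pos
  have hinv : (1 + x t)⁻¹ ≤ 1 := inv_le_one_of_one_le₀ (by linarith [h.pos t])
  have hinv' : 0 < (1 + x s)⁻¹ := inv_pos.2 (by linarith [h.pos s])
  nlinarith [mul_pos hys hK]

theorem angularMomentum_nonpos (hlam : 0 < lam) (hxt : x t = 2) (hxs : 3 < x s) (hys : y s ≤ 1)
    (hbig : exp ((lam + 2) ^ 2) < x s * (lam * exp (-(5 / 2)))) :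
    angularMomentum lam (x t) (y t) (θ t) ≤ 0 := by
  by_contra! hJ
  have hslope (u : ℝ) (hu : u ∈ Ioo s t) : y s / x s ≤ y u / x u :=
    le_of_hasDerivAt_nonneg_Ioo h.hasDerivAt_slope hu.1.le fun v hv ↦ by
      have hJv := hJ.trans_le (hd.angularMomentum_le h hlam hv.1.le (hv.2.trans hu.2).le le_rfl)
      have := pos_of_mul_pos_right hJv (weight_pos _ _ _).le
      have := h.speed_pos v
      positivity
  obtain ⟨r, hr, hxr⟩ := intermediate_value_Ioo' hd.lt.le h.continuous_x.continuousOn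
    (⟨by linarith, hxs⟩ : (3 : ℝ) ∈ Ioo (x t) (x s))
  have hxs₀ := h.pos s
  have hys₀ := hd.y_pos
  have hdrop := h.angularMomentum_add_le hlam (q := y s / x s * exp (-(5 / 2))) (by positivity)
    hr.2.le fun u hu ↦ by
      have hu' : u ∈ Ioo s t := ⟨hr.1.trans hu.1, hu.2⟩
      have hweight := hd.exp_neg_le_weight h hlam hys (Ioo_subset_Ico_self hu')
        ⟨by linarith [hd.x_le h hu'.1.le hu.2.le le_rfl], hxr ▸ hd.x_le h hr.1.le hu.1.le hu.2.le⟩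
      exact mul_le_mul (hslope u hu') hweight (exp_pos _).le
        ((by positivity : 0 ≤ y s / x s).trans (hslope u hu'))
  have hstart : angularMomentum lam (x r) (y r) (θ r) ≤ weight lam (x s) 0 * y s := by
    calc _ ≤ angularMomentum lam (x s) (y s) (θ s) :=
          hd.angularMomentum_le h hlam le_rfl hr.1.le hr.2.le
      _ = weight lam (x s) (y s) * y s := by simp [angularMomentum, hd.θ_eq]
      _ ≤ _ := by gcongr; exact weight_le_weight_zero _ _ _
  have hlt : lam * exp (-(5 / 2)) / x s * y s < weight lam (x s) 0 * y s := by
    calc _ = lam * (y s / x s * exp (-(5 / 2))) * (x r - x t) := by rw [hxr, hxt]; ring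
      _ < _ := by linarith
  have hlt' := (div_lt_iff₀ hxs₀).1 (lt_of_mul_lt_mul_right hlt hys₀.le)
  nlinarith [weight_mul_one_add_sq_le hlam hxs₀, weight_pos lam (x s) 0]

theorem angularMomentum_le_neg (hlam : 0 < lam) (hxt : x t = 1) (hxs : 3 < x s) (hys : y s ≤ 1)
    (hbig : exp ((lam + 2) ^ 2) < x s * (lam * exp (-(5 / 2)))) (hyt : 0 ≤ y t) :
    angularMomentum lam (x t) (y t) (θ t) ≤ -(lam * (y t / 2 * exp (-(5 / 2)))) := by
  obtain ⟨r, hr, hxr⟩ := intermediate_value_Ioo' hd.lt.le h.continuous_x.continuousOn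
    (⟨by linarith, by linarith⟩ : (2 : ℝ) ∈ Ioo (x t) (x s))
  have hJr := (hd.mono hr.1 hr.2.le).angularMomentum_nonpos h hlam hxr hxs hys hbig
  have hdrop := h.angularMomentum_add_le hlam (q := y t / 2 * exp (-(5 / 2))) (by positivity)
    hr.2.le fun u hu ↦ by
      have hsu := hr.1.trans hu.1
      have hxu : x u ≤ 2 := hxr ▸ hd.x_le h hr.1.le hu.1.le hu.2.le
      have hxu' : 1 ≤ x u := hxt ▸ hd.x_le h hsu.le hu.2.le le_rfl
      have hy := (hd.leftwardAbove u ⟨hsu.le, hu.2⟩).1.le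
      gcongr
      · exact hd.y_le h hsu.le hu.2.le le_rfl
      · exact hd.exp_neg_le_weight h hlam hys ⟨hsu.le, hu.2⟩ ⟨hxu', by linarith⟩
  rw [hxr, hxt] at hdrop
  rw [hxr] at hJr
  rw [hxt]
  linarith

theorem rpow_neg_x_le (hlam : 0 < lam) (hxs : 3 < x s) (hys : y s ≤ 1)
    (hbig : exp ((lam + 2) ^ 2) < x s * (lam * exp (-(5 / 2)))) (hyt : 0 ≤ y t) :
    x t ^ (-(lam + 1)) ≤ 1 + 2 * (lam + 1) / (lam * exp (-(5 / 2))) := by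
  have hxt := h.pos t
  rcases le_or_gt 1 (x t) with hx1 | hx1
  · exact (rpow_le_one_of_one_le_of_nonpos hx1 (by linarith)).trans
      (le_add_of_nonneg_right (by positivity))
  obtain ⟨r, hr, hxr⟩ := intermediate_value_Ioo' hd.lt.le h.continuous_x.continuousOn
    (⟨hx1, by linarith⟩ : (1 : ℝ) ∈ Ioo (x t) (x s))
  have hyr := (hd.leftwardAbove r (Ioo_subset_Ico_self hr)).1
  have hJ := (hd.mono hr.1 hr.2.le).angularMomentum_le_neg h hlam hxr hxs hys hbig hyr.le
  set w := lam * (y r / 2 * exp (-(5 / 2))) with hw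
  have hslope := h.slope_add_rpow_le hlam (by positivity : 0 ≤ w) hr.2.le fun u hu ↦
    (hd.angularMomentum_le h hlam hr.1.le hu.1.le hu.2.le).trans hJ
  rw [hxr, one_rpow, div_one] at hslope
  have hslope₀ : 0 ≤ y t / x t := div_nonneg hyt hxt.le
  refine le_of_mul_le_mul_left (a := w / (lam + 1)) ?_ (by positivity)
  calc w / (lam + 1) * x t ^ (-(lam + 1)) ≤ y r + w / (lam + 1) * 1 := by linarith
    _ = _ := by rw [hw]; field_simp; ring

end Descends

theorem eventually_forall_orthogonalShot_crossesAxis (hlam : 0 < lam) :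
    ∀ᶠ R in atTop, ∀ x y θ, OrthogonalShot lam R x y θ → CrossesAxis y θ := by
  set K := exp ((lam + 2) ^ 2)
  set V := 1 + 2 * (lam + 1) / (lam * exp (-(5 / 2)))
  have hV1 : 1 ≤ V := le_add_of_nonneg_right (by positivity)
  filter_upwards [eventually_ge_atTop (100 + 100 * lam),
    eventually_gt_atTop (2 * K / (lam * exp (-(5 / 2)))),
    eventually_gt_atTop (2 * π * K / (exp (-(lam / 2)) / V))] with R hR hR₁ hR₂ x y θ h
  rw [div_lt_iff₀ (by positivity)] at hR₁ hR₂
  by_contra hno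
  have hR₀ : 0 < R := by linarith
  obtain ⟨t, hl⟩ := h.exists_leavesAt hlam hR
  obtain ⟨s, hs, hθs, hxs, hys⟩ := h.exists_top hlam hR hl
  have hd : Descends y θ s t :=
    ⟨hs.2, hθs, fun u hu ↦ hl.leftwardAbove u ⟨hs.1.trans_le hu.1, hu.2⟩⟩
  have hg := h.toDirectedGeodesic
  have hθt := hl.θ_eq_of_not_crossesAxis hg (hd.sin_neg hg ⟨hs.2, le_rfl⟩) hno
  have hyt := (hl.y_nonneg_and_θ_mem h.continuous_y h.continuous_θ).1
  have hys₁ : y s ≤ 1 := hys.trans ((div_le_one hR₀).2 (by linarith [pi_lt_four]))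
  have hxt := hd.rpow_neg_x_le hg hlam (by linarith) hys₁ (by
    nlinarith [mul_pos hlam (exp_pos (-(5 / 2 : ℝ)))]) hyt
  have hlower := exp_neg_div_le_weight hlam (h.pos t) hV1 hxt (hl.x_sq_le hg hθt)
  have hupper : weight lam (x t) 0 < exp (-(lam / 2)) / V := by
    calc weight lam (x t) 0 ≤ y s / 2 * K := hd.weight_zero_le hg hlam hθt
      _ ≤ 4 * π / R / 2 * K := by gcongr
      _ = 2 * π * K / R := by field_simp; norm_num
      _ < exp (-(lam / 2)) / V := by rw [div_lt_iff₀ hR₀]; linarith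
  exact hupper.not_ge hlower

end Descent

section ClosingUp

variable {lam : ℝ} {x y θ : ℝ → ℝ} {l : ℝ}

namespace DirectedGeodesic

theorem reflect (h : DirectedGeodesic lam x y θ) (c : ℝ) {d : ℝ} (hcos : cos d = -1)
    (hsin : sin d = 0) :
    DirectedGeodesic lam (fun t ↦ x (c - t)) (fun t ↦ -y (c - t)) fun t ↦ d - θ (c - t) := by
  have hspeed (x y : ℝ) : speed x (-y) = speed x y := by simp only [speed, neg_sq]
  have hcos' (a : ℝ) : cos (d - a) = -cos a := by rw [cos_sub, hcos, hsin]; ring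
  have hsin' (a : ℝ) : sin (d - a) = sin a := by rw [sin_sub, hcos, hsin]; ring
  refine ⟨fun t ↦ h.pos _, fun t ↦ ?_, fun t ↦ ?_, fun t ↦ ?_⟩
  · refine ((h.hasDerivAt_x (c - t)).comp_const_sub c t).congr_deriv ?_
    rw [hspeed, hcos', mul_neg]
  · refine ((h.hasDerivAt_y (c - t)).comp_const_sub c t).neg.congr_deriv ?_
    rw [hspeed, hsin', neg_neg]
  · refine (((h.hasDerivAt_θ (c - t)).comp_const_sub c t).const_sub d).congr_deriv ?_
    simp only [curvature, hspeed, hcos', hsin']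
    ring

theorem reflect_eq_of_cos_eq_zero (h : DirectedGeodesic lam x y θ) (hy : y l = 0)
    (hθ : cos (θ l) = 0) (t : ℝ) : x (2 * l - t) = x t ∧ y (2 * l - t) = -y t := by
  have hl : 2 * l - l = l := by ring
  obtain ⟨hxt, hyt, -⟩ := (h.reflect (2 * l) (d := 2 * θ l) (by rw [cos_two_mul, hθ]; norm_num)
    (by rw [sin_two_mul, hθ, mul_zero])).eq_of_eq_at h (t₀ := l) (by rw [hl])
    (by rw [hl, hy, neg_zero]) (by rw [hl]; ring) t
  exact ⟨hxt, neg_eq_iff_eq_neg.1 hyt⟩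

end DirectedGeodesic

theorem LeavesAt.strictAntiOn_x (hl : LeavesAt y θ l) (h : DirectedGeodesic lam x y θ) :
    StrictAntiOn x (Icc 0 l) := fun _ hs _ ht hst ↦
  h.x_lt_of_leftward hst fun u hu ↦
    (hl.leftwardAbove u ⟨hs.1.trans_lt hu.1, hu.2.trans_le ht.2⟩).2

theorem OrthogonalShot.exists_periodic_injOn {R : ℝ} (h : OrthogonalShot lam R x y θ)
    (hmeet : MeetsAxisOrthogonally y θ) :
    ∃ P > 0, Function.Periodic x P ∧ Function.Periodic y P ∧
      InjOn (fun t ↦ (x t, y t)) (Ico 0 P) := by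
  obtain ⟨l, hl, hyl, hθl⟩ := hmeet
  have hg := h.toDirectedGeodesic
  have hsymm₀ (t : ℝ) : x (-t) = x t ∧ y (-t) = -y t := by
    simpa only [mul_zero, zero_sub] using
      hg.reflect_eq_of_cos_eq_zero h.y_zero (h.θ_zero ▸ cos_pi_div_two) t
  have hsymm := hg.reflect_eq_of_cos_eq_zero hyl (hθl ▸ cos_three_pi_div_two)
  refine ⟨2 * l, by linarith [hl.pos], fun t ↦ ?_, fun t ↦ ?_,
    injOn_prodMk_of_reflection (hl.strictAntiOn_x hg).injOn (fun t ↦ (hsymm t).1)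
      (fun t ↦ (hsymm t).2) h.y_zero fun t ht ↦ (hl.leftwardAbove t ht).1⟩
  · rw [← (hsymm₀ t).1, ← (hsymm (-t)).1, sub_neg_eq_add, add_comm]
  · rw [add_comm, ← sub_neg_eq_add, (hsymm (-t)).2, (hsymm₀ t).2, neg_neg]

theorem exists_closed_directedGeodesic (hlam : 0 < lam) :
    ∃ x y θ, DirectedGeodesic lam x y θ ∧ ∃ P > 0, Function.Periodic x P ∧
      Function.Periodic y P ∧ InjOn (fun t ↦ (x t, y t)) (Ico 0 P) := by
  obtain ⟨X, Y, T, hF⟩ := exists_shootingFamily lam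
  obtain ⟨R₁, ⟨hcross, hR₁⟩, hR₁_pos⟩ := ((eventually_forall_orthogonalShot_crossesAxis hlam).and
    (eventually_ge_atTop (√(2 * (lam + 1))))).and (eventually_gt_atTop 0) |>.exists
  obtain ⟨R, hR, hmeet⟩ := hF.exists_meetsAxisOrthogonally hlam hR₁
    (hcross _ _ _ (hF.shot R₁ hR₁_pos))
  have h := hF.shot R hR
  exact ⟨_, _, _, h.toDirectedGeodesic, h.exists_periodic_injOn hmeet⟩

/-- A regular solution of the geodesic equations of the metric, with velocity `(u, w)`. -/
structure AffineGeodesic (lam : ℝ) (x y u w : ℝ → ℝ) : Prop where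
  pos : ∀ s, 0 < x s
  velocity_sq_pos : ∀ s, 0 < u s ^ 2 + w s ^ 2
  hasDerivAt_x : ∀ s, HasDerivAt x (u s) s
  hasDerivAt_y : ∀ s, HasDerivAt y (w s) s
  hasDerivAt_u : ∀ s, HasDerivAt u
    (-(lam / x s - x s / 2) * (u s ^ 2 - w s ^ 2) + y s * u s * w s) s
  hasDerivAt_w : ∀ s, HasDerivAt w
    (y s / 2 * (w s ^ 2 - u s ^ 2) - 2 * (lam / x s - x s / 2) * u s * w s) s

namespace AffineGeodesic

variable {u w : ℝ → ℝ} (h : AffineGeodesic lam x y u w)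

include h

theorem continuous_x : Continuous x :=
  continuous_iff_continuousAt.2 fun s ↦ (h.hasDerivAt_x s).continuousAt

theorem continuous_y : Continuous y :=
  continuous_iff_continuousAt.2 fun s ↦ (h.hasDerivAt_y s).continuousAt

theorem continuous_u : Continuous u :=
  continuous_iff_continuousAt.2 fun s ↦ (h.hasDerivAt_u s).continuousAt

theorem continuous_w : Continuous w :=
  continuous_iff_continuousAt.2 fun s ↦ (h.hasDerivAt_w s).continuousAt

theorem continuous_const_div_x : Continuous fun s ↦ lam / x s :=
  continuous_const.div h.continuous_x fun s ↦ (h.pos s).ne'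

theorem contDiff_x : ContDiff ℝ 2 x := by
  refine contDiff_two_of_hasDerivAt h.hasDerivAt_x h.hasDerivAt_u ?_
  have := h.continuous_x
  have := h.continuous_y
  have := h.continuous_u
  have := h.continuous_w
  have := h.continuous_const_div_x
  fun_prop

theorem contDiff_y : ContDiff ℝ 2 y := by
  refine contDiff_two_of_hasDerivAt h.hasDerivAt_y h.hasDerivAt_w ?_
  have := h.continuous_x
  have := h.continuous_y
  have := h.continuous_u
  have := h.continuous_w
  have := h.continuous_const_div_x
  fun_prop

theorem deriv_x : deriv x = u := funext fun s ↦ (h.hasDerivAt_x s).deriv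

theorem deriv_y : deriv y = w := funext fun s ↦ (h.hasDerivAt_y s).deriv

end AffineGeodesic

namespace DirectedGeodesic

theorem hasDerivAt_cos_div_weight (h : DirectedGeodesic lam x y θ) (t : ℝ) :
    HasDerivAt (fun t ↦ cos (θ t) / weight lam (x t) (y t))
      (speed (x t) (y t) / weight lam (x t) (y t) *
        (-(lam / x t - x t / 2) * (cos (θ t) ^ 2 - sin (θ t) ^ 2)
          + y t * cos (θ t) * sin (θ t))) t := by
  have hE := weight_pos lam (x t) (y t)
  refine ((h.hasDerivAt_cos t).div (h.hasDerivAt_weight t) hE.ne').congr_deriv ?_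
  rw [curvature, div_eq_iff (by positivity)]
  field_simp
  ring

theorem hasDerivAt_sin_div_weight (h : DirectedGeodesic lam x y θ) (t : ℝ) :
    HasDerivAt (fun t ↦ sin (θ t) / weight lam (x t) (y t))
      (speed (x t) (y t) / weight lam (x t) (y t) *
        (y t / 2 * (sin (θ t) ^ 2 - cos (θ t) ^ 2)
          - 2 * (lam / x t - x t / 2) * cos (θ t) * sin (θ t))) t := by
  have hE := weight_pos lam (x t) (y t)
  refine ((h.hasDerivAt_sin t).div (h.hasDerivAt_weight t) hE.ne').congr_deriv ?_
  rw [curvature, div_eq_iff (by positivity)]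
  field_simp
  ring

theorem continuous_speed (h : DirectedGeodesic lam x y θ) :
    Continuous fun t ↦ speed (x t) (y t) := by
  have hx := h.continuous_x
  have hy := h.continuous_y
  exact (hx.div (by fun_prop) fun t ↦ by positivity).mul
    (continuous_const.div (by fun_prop) fun t ↦ by positivity)

theorem continuous_weight (h : DirectedGeodesic lam x y θ) :
    Continuous fun t ↦ weight lam (x t) (y t) :=
  continuous_iff_continuousAt.2 fun t ↦ (h.hasDerivAt_weight t).continuousAt

theorem affineGeodesic_comp (h : DirectedGeodesic lam x y θ) {σ : ℝ → ℝ}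
    (hσ : ∀ s, HasDerivAt σ
      (speed (x (σ s)) (y (σ s)) * weight lam (x (σ s)) (y (σ s)))⁻¹ s) :
    AffineGeodesic lam (fun s ↦ x (σ s)) (fun s ↦ y (σ s))
      (fun s ↦ cos (θ (σ s)) / weight lam (x (σ s)) (y (σ s)))
      fun s ↦ sin (θ (σ s)) / weight lam (x (σ s)) (y (σ s)) := by
  have hw (s : ℝ) := weight_pos lam (x (σ s)) (y (σ s))
  have hμ (s : ℝ) := h.speed_pos (σ s)
  refine ⟨fun s ↦ h.pos _, fun s ↦ ?_, fun s ↦ ?_, fun s ↦ ?_, fun s ↦ ?_, fun s ↦ ?_⟩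
  · have := hw s
    rw [div_pow, div_pow, ← add_div, cos_sq_add_sin_sq]
    positivity
  · refine ((h.hasDerivAt_x (σ s)).comp s (hσ s)).congr_deriv ?_
    field_simp [(hw s).ne', (hμ s).ne']
  · refine ((h.hasDerivAt_y (σ s)).comp s (hσ s)).congr_deriv ?_
    field_simp [(hw s).ne', (hμ s).ne']
  · refine ((h.hasDerivAt_cos_div_weight (σ s)).comp s (hσ s)).congr_deriv ?_
    field_simp [(hw s).ne', (hμ s).ne', (h.pos (σ s)).ne']
  · refine ((h.hasDerivAt_sin_div_weight (σ s)).comp s (hσ s)).congr_deriv ?_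
    field_simp [(hw s).ne', (hμ s).ne', (h.pos (σ s)).ne']

end DirectedGeodesic

theorem exists_closed_affineGeodesic (hlam : 0 < lam) :
    ∃ x y u w, AffineGeodesic lam x y u w ∧ ∃ p > 0, Function.Periodic x p ∧
      Function.Periodic y p ∧ InjOn (fun s ↦ (x s, y s)) (Ico 0 p) := by
  obtain ⟨x, y, θ, h, P, hP, hxP, hyP, hinj⟩ := exists_closed_directedGeodesic hlam
  obtain ⟨τ, hτ₀, hτ, hτP⟩ := exists_orderIso_hasDerivAt_of_periodic
    (f := fun t ↦ speed (x t) (y t) * weight lam (x t) (y t))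
    (h.continuous_speed.mul h.continuous_weight)
    (fun t ↦ mul_pos (h.speed_pos t) (weight_pos _ _ _)) hP
    fun t ↦ by simp only [hxP t, hyP t]
  have hσ (s : ℝ) := (hτ (τ.symm s)).of_local_left_inverse τ.symm.continuous.continuousAt
    (mul_pos (h.speed_pos _) (weight_pos _ _ _)).ne' (.of_forall τ.apply_symm_apply)
  have hσP (s : ℝ) : τ.symm (s + τ P) = τ.symm s + P := by
    rw [τ.symm_apply_eq, hτP, τ.apply_symm_apply]
  refine ⟨_, _, _, _, h.affineGeodesic_comp hσ, τ P, hτ₀ ▸ τ.strictMono hP,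
    fun s ↦ ?_, fun s ↦ ?_, hinj.comp τ.symm.injective.injOn fun s hs ↦ ?_⟩
  · simp only [hσP, hxP _]
  · simp only [hσP, hyP _]
  · rwa [mem_Ico, τ.le_symm_apply, τ.symm_apply_lt, hτ₀]

end ClosingUp

end Angenent

/-- Existence of λ-Angenent curves: for every `λ > 0` there is a nonconstant periodic
embedded regular `C²` curve in the half-plane `{x > 0}` satisfying the geodesic
equations of the conformal metric `e^{2φ}(dx² + dy²)` with
`φ(x,y) = λ ln x − (x² + y²)/4`. -/
theorem exists_lambda_angenent_curve (lam : ℝ) (hlam : 0 < lam) :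
    ∃ (p : ℝ) (x y : ℝ → ℝ), 0 < p ∧
      ContDiff ℝ 2 x ∧ ContDiff ℝ 2 y ∧
      (∀ s : ℝ, x (s + p) = x s ∧ y (s + p) = y s) ∧
      (∃ s : ℝ, (x s, y s) ≠ (x 0, y 0)) ∧
      Set.InjOn (fun s => (x s, y s)) (Set.Ico 0 p) ∧
      (∀ s : ℝ, 0 < x s) ∧
      (∀ s : ℝ, 0 < (deriv x s) ^ 2 + (deriv y s) ^ 2) ∧
      (∀ s : ℝ,
        deriv (deriv x) s
          + (lam / x s - x s / 2) * ((deriv x s) ^ 2 - (deriv y s) ^ 2)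
          + 2 * (-(y s) / 2) * deriv x s * deriv y s = 0 ∧
        deriv (deriv y) s
          + (-(y s) / 2) * ((deriv y s) ^ 2 - (deriv x s) ^ 2)
          + 2 * (lam / x s - x s / 2) * deriv x s * deriv y s = 0) := by
  obtain ⟨x, y, u, w, h, p, hp, hxp, hyp, hinj⟩ := Angenent.exists_closed_affineGeodesic hlam
  have hne : (x (p / 2), y (p / 2)) ≠ (x 0, y 0) :=
    hinj.ne ⟨by positivity, half_lt_self hp⟩ ⟨le_rfl, hp⟩ (by positivity)
  refine ⟨p, x, y, hp, h.contDiff_x, h.contDiff_y, fun s ↦ ⟨hxp s, hyp s⟩, ⟨p / 2, hne⟩, hinj,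
    h.pos, fun s ↦ ?_, fun s ↦ ?_⟩
  · simpa only [h.deriv_x, h.deriv_y] using h.velocity_sq_pos s
  · rw [h.deriv_x, h.deriv_y, (h.hasDerivAt_u s).deriv, (h.hasDerivAt_w s).deriv]
    constructor <;> ring
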